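/- arXiv:1111.1428 — 2 statements merged into one kernel-verified Lean document; each statement's English description precedes it below -/
import Mathlib

section
/- Fix integers m ≥ 2, s ≥ 4 and d ≥ 2s+2. For every integer r with d−s+3 ≤ r ≤ d+s−2 and r+s ≡ d+1 (mod 2), one has σ_{s,r}(X_{m,d}) = ∅. -/
open scoped LinearAlgebra.Projectivization

noncomputable section

/-- The polynomial ring in `m+1` variables over `K`: homogeneous coordinate ring of `ℙ^m`. -/
abbrev PR (K : Type) [Field K] (m : ℕ) : Type := MvPolynomial (Fin (m+1)) K

/-- The space of degree-`d` forms in `m+1` variables. -/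
abbrev Hd (K : Type) [Field K] (m d : ℕ) : Submodule K (PR K m) :=
  MvPolynomial.homogeneousSubmodule (Fin (m+1)) K d

/-- Projective `m`-space over `K`. -/
abbrev Pm (K : Type) [Field K] (m : ℕ) := ℙ K (Fin (m+1) → K)

/-- The target projective space `ℙ^n`, `n = C(m+d,m) - 1`, of the degree-`d` Veronese
embedding, realized as the projectivization of the dual of the space of degree-`d` forms
(the space of degree-`d` symmetric tensors). -/
abbrev PN (K : Type) [Field K] (m d : ℕ) := ℙ K (Module.Dual K (Hd K m d))

variable {K : Type} [Field K] {m : ℕ}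

/-- Hilbert function of `R/I` in degree `t`. -/
def hilbQ (I : Ideal (PR K m)) (t : ℕ) : ℕ :=
  Module.finrank K ((Hd K m t).map (Ideal.Quotient.mkₐ K I).toLinearMap)

/-- The degree (length) of the projective scheme defined by `I`: the eventual value of the
Hilbert function of `R/I`. -/
def idealDeg (I : Ideal (PR K m)) : ℕ := Filter.limsup (fun t => hilbQ I t) Filter.atTop

/-- `h^1(𝓘_Z(d))` for the zero-dimensional scheme `Z` with (saturated) ideal `I`:
it equals `deg Z - dim (R/I)_d`. -/
def h1I (I : Ideal (PR K m)) (d : ℕ) : ℕ := idealDeg I - hilbQ I d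

/-- An ideal is homogeneous. -/
def IsHomogI (I : Ideal (PR K m)) : Prop :=
  ∀ f ∈ I, ∀ n : ℕ, MvPolynomial.homogeneousComponent n f ∈ I

/-- An ideal is saturated with respect to the irrelevant maximal ideal. -/
def IsSatI (I : Ideal (PR K m)) : Prop :=
  ∀ f : PR K m, (∀ i, MvPolynomial.X i * f ∈ I) → f ∈ I

/-- A closed subscheme of `ℙ^m`, given by its saturated homogeneous ideal. -/
structure PSub (K : Type) [Field K] (m : ℕ) where
  I : Ideal (PR K m)
  homog : IsHomogI I
  sat : IsSatI I

/-- A (closed sub)scheme is zero-dimensional iff the Hilbert function of `R/I` is bounded. -/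
def IsZeroDimI (I : Ideal (PR K m)) : Prop := ∃ C, ∀ t, hilbQ I t ≤ C

/-- A polynomial vanishes at a projective point (every homogeneous component vanishes
at a representative). -/
def vanishesAt (f : PR K m) (a : Pm K m) : Prop :=
  ∀ n : ℕ, MvPolynomial.eval a.rep (MvPolynomial.homogeneousComponent n f) = 0

/-- Zero locus of an ideal in `ℙ^m`. -/
def pzeroLocus (I : Ideal (PR K m)) : Set (Pm K m) := {a | ∀ f ∈ I, vanishesAt f a}

/-- The (saturated) homogeneous ideal of a set of points of `ℙ^m`. -/
def idealOfSet (S : Set (Pm K m)) : Ideal (PR K m) :=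
  Ideal.span {f : PR K m | (∃ n, f.IsHomogeneous n) ∧ ∀ a ∈ S, MvPolynomial.eval a.rep f = 0}

/-- Saturation of a homogeneous ideal: the smallest saturated homogeneous ideal containing it. -/
def satIdeal (J : Ideal (PR K m)) : Ideal (PR K m) := sInf {J' | J ≤ J' ∧ IsHomogI J' ∧ IsSatI J'}

/-- The scheme defined by the (saturated) ideal `I` is reduced. -/
def IsReducedI (I : Ideal (PR K m)) : Prop := I = idealOfSet (pzeroLocus I)

/-- Connected component of a zero-dimensional scheme at a point `a`: the largest subscheme
supported at `a`, i.e. the `a`-primary component. -/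
def componentAt (I : Ideal (PR K m)) (a : Pm K m) : Ideal (PR K m) :=
  sInf {J | I ≤ J ∧ IsHomogI J ∧ IsSatI J ∧ pzeroLocus J ⊆ {a}}

/-- Residual scheme of `Z` with respect to the hypersurface `f = 0`: the colon ideal `(I_Z : f)`. -/
def resIdeal (I : Ideal (PR K m)) (f : PR K m) : Ideal (PR K m) :=
  Submodule.colon I (Ideal.span {f})

/-- Degree of the scheme-theoretic intersection of the subschemes defined by `I` and `J`. -/
def interDeg (I J : Ideal (PR K m)) : ℕ := idealDeg (I ⊔ J)

/-- The degree-`d` Veronese image of a vector `v`: the evaluation-at-`v` functional on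
degree-`d` forms. -/
def nu (d : ℕ) (v : Fin (m+1) → K) : Module.Dual K (Hd K m d) :=
  (MvPolynomial.aeval v).toLinearMap ∘ₗ (Hd K m d).subtype

/-- The linear span of the Veronese image `ν_d(S)` of a set `S` of points of `ℙ^m`. -/
def dualSpan (d : ℕ) (S : Set (Pm K m)) : Submodule K (Module.Dual K (Hd K m d)) :=
  Submodule.span K ((fun a => nu d a.rep) '' S)

/-- The linear span `⟨ν_d(Z)⟩` of the Veronese image of the subscheme with ideal `I`:
the annihilator of the degree-`d` part of `I`. -/
def schemeSpanSub (I : Ideal (PR K m)) (d : ℕ) : Submodule K (Module.Dual K (Hd K m d)) where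
  carrier := {φ | ∀ f : Hd K m d, (f : PR K m) ∈ I → φ f = 0}
  add_mem' := by
    intro a b ha hb f hf
    simp [LinearMap.add_apply, ha f hf, hb f hf]
  zero_mem' := by intro f hf; simp
  smul_mem' := by
    intro c a ha f hf
    simp [LinearMap.smul_apply, ha f hf]

/-- `P ∈ ⟨ν_d(Z)⟩`, for `Z` the subscheme with ideal `I`. -/
def inSpanI (I : Ideal (PR K m)) (d : ℕ) (P : PN K m d) : Prop := P.rep ∈ schemeSpanSub I d

/-- `P ∈ ⟨ν_d(S)⟩` for a set `S` of points of `ℙ^m`. -/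
def inSpanSet (d : ℕ) (S : Set (Pm K m)) (P : PN K m d) : Prop := P.rep ∈ dualSpan d S

/-- `L` is a linear subspace of `ℙ^m`. -/
def IsLinearSub (L : Set (Pm K m)) : Prop :=
  ∃ W : Submodule K (Fin (m+1) → K), L = {a | a.submodule ≤ W}

/-- `L` is a line of `ℙ^m`. -/
def IsLine (L : Set (Pm K m)) : Prop :=
  ∃ W : Submodule K (Fin (m+1) → K), Module.finrank K W = 2 ∧ L = {a | a.submodule ≤ W}

/-- `L` is a plane of `ℙ^m`. -/
def IsPlane (L : Set (Pm K m)) : Prop :=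
  ∃ W : Submodule K (Fin (m+1) → K), Module.finrank K W = 3 ∧ L = {a | a.submodule ≤ W}

/-- `J` is the (saturated homogeneous) ideal of a conic of `ℙ^m`: a degree-2 curve contained
in a plane (possibly reducible). -/
def IsConic (J : Ideal (PR K m)) : Prop :=
  ∃ (W : Submodule K (Fin (m+1) → K)) (q : PR K m),
    Module.finrank K W = 3 ∧ q.IsHomogeneous 2 ∧
    q ∉ idealOfSet {a : Pm K m | a.submodule ≤ W} ∧
    J = satIdeal (idealOfSet {a : Pm K m | a.submodule ≤ W} ⊔ Ideal.span {q})

/-- The algebra of polynomial functions on a `K`-vector space. -/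
def polyFunctions (K V : Type) [Field K] [AddCommGroup V] [Module K V] : Subalgebra K (V → K) :=
  Algebra.adjoin K {g : V → K | ∃ φ : V →ₗ[K] K, g = ⇑φ}

/-- Zariski closure of a subset of a projective space. -/
def zClosure {V : Type} [AddCommGroup V] [Module K V] (T : Set (ℙ K V)) : Set (ℙ K V) :=
  {P | ∀ F ∈ polyFunctions K V, (∀ Q ∈ T, ∀ c : K, F (c • Q.rep) = 0) →
    ∀ c : K, F (c • P.rep) = 0}

/-- The Veronese variety `X_{m,d} = ν_d(ℙ^m)` as a subset of `PN K m d`. -/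
def XSet (K : Type) [Field K] (m d : ℕ) : Set (PN K m d) :=
  {Q | ∃ a : Pm K m, Q.submodule = Submodule.span K {nu d a.rep}}

/-- The image `ν_d(S)` of a set of points of `ℙ^m`, as a subset of `PN K m d`. -/
def nuSet (d : ℕ) (S : Set (Pm K m)) : Set (PN K m d) :=
  {Q | ∃ a ∈ S, Q.submodule = Submodule.span K {nu d a.rep}}

/-- The rank of a point `P` of `PN` with respect to a subset `Y ⊆ PN`. -/
def rankWrt {m d : ℕ} (Y : Set (PN K m d)) (P : PN K m d) : ℕ :=
  sInf {r | ∃ S : Finset (PN K m d), ↑S ⊆ Y ∧ S.card = r ∧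
    P.rep ∈ Submodule.span K (Projectivization.rep '' (S : Set (PN K m d)))}

/-- The `s`-th secant variety of `Y ⊆ PN`: the Zariski closure of the union of the spans
of `s` points of `Y`. -/
def secantWrt {m d : ℕ} (Y : Set (PN K m d)) (s : ℕ) : Set (PN K m d) :=
  zClosure {Q | ∃ S : Finset (PN K m d), ↑S ⊆ Y ∧ S.card ≤ s ∧
    Q.rep ∈ Submodule.span K (Projectivization.rep '' (S : Set (PN K m d)))}

/-- The border rank of `P` with respect to `Y ⊆ PN`. -/
def brankWrt {m d : ℕ} (Y : Set (PN K m d)) (P : PN K m d) : ℕ :=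
  sInf {s | 0 < s ∧ P ∈ secantWrt Y s}

/-- Symmetric rank. -/
def srank {m : ℕ} (d : ℕ) (P : PN K m d) : ℕ := rankWrt (XSet K m d) P

/-- Border rank. -/
def brank {m : ℕ} (d : ℕ) (P : PN K m d) : ℕ := brankWrt (XSet K m d) P

/-- Cactus rank: minimal degree of a zero-dimensional closed subscheme `E ⊂ ℙ^m` with
`P ∈ ⟨ν_d(E)⟩`. -/
def crank {m : ℕ} (d : ℕ) (P : PN K m d) : ℕ :=
  sInf {c | ∃ Z : PSub K m, IsZeroDimI Z.I ∧ idealDeg Z.I = c ∧ inSpanI Z.I d P}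

/-- `σ_{s,r}(X_{m,d})`. -/
def sigmaSet (K : Type) [Field K] (m d s r : ℕ) : Set (PN K m d) :=
  {P | brank d P = s ∧ srank d P = r}

/-- A property `Φ` holds for a general `k`-tuple of points of the linear subspace of `ℙ^m`
determined by `W`. -/
def GenerallyOn (W : Submodule K (Fin (m+1) → K)) (k : ℕ)
    (Φ : (Fin k → Pm K m) → Prop) : Prop :=
  ∃ w : Fin 3 → W, Submodule.span K (Set.range fun j => (w j : Fin (m+1) → K)) = W ∧
    ∃ F : MvPolynomial (Fin k × Fin 3) K, F ≠ 0 ∧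
      ∀ c : Fin k → Fin 3 → K,
        MvPolynomial.eval (fun p => c p.1 p.2) F ≠ 0 →
        ∀ e : Fin k → Pm K m,
          (∀ i, (e i).submodule = Submodule.span K {∑ j, c i j • (w j : Fin (m+1) → K)}) → Φ e

end

/-
Let `B` be a minimal decomposition of `P`. A set of at most `2 t + 1` points with at most `t + 1` of
them on any line imposes independent conditions on forms of degree `t`. If two subsets covering `B`
impose independent conditions on forms of complementary degrees `t` and `t'`, then the catalecticant
of `P` in these degrees has rank at least the cardinality of their intersection, and this bounds the
border rank from below. Hence, when the rank `r` exceeds the border rank `s`, but `r + 2 ≤ d + s`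
and `2 s ≤ d`, more than `t + 1` points of `B` lie on a line, where `t = ⌊d / 2⌋`, and the set `S`
of the remaining points has at most `t` elements.

The part of `P` supported on the line is a binary form. By Sylvester's theorem, if `n` is the least
degree of a generator of its apolar ideal, then its border rank is `n` and its rank is `n` or
`d + 2 - n`; here it is the latter, because more than `n` points of the minimal `B` lie on the line.
Forms of middle degree separate the points of `S` from one another and from the line, so `S`
contributes `|S|` to both numbers: `r = d + 2 - n + |S|` and `s = n + |S|`. The sum `d + 2 + 2 |S|`
has the parity of `d`.
-/

section Apolarity

/-- The apolar ideal of a linear functional `ψ` on an algebra: the largest ideal on which `ψ`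
vanishes. -/
def apolarIdeal {R A : Type*} [CommSemiring R] [CommSemiring A] [Algebra R A]
    (ψ : A →ₗ[R] R) : Ideal A where
  carrier := {f | ∀ h, ψ (f * h) = 0}
  add_mem' ha hb h := by rw [add_mul, map_add, ha, hb, add_zero]
  zero_mem' h := by rw [zero_mul, map_zero]
  smul_mem' c f hf h := by rw [smul_eq_mul, mul_assoc, mul_left_comm, hf]

theorem mem_apolarIdeal {R A : Type*} [CommSemiring R] [CommSemiring A] [Algebra R A]
    {ψ : A →ₗ[R] R} {f : A} : f ∈ apolarIdeal ψ ↔ ∀ h, ψ (f * h) = 0 :=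
  Iff.rfl

open Polynomial

variable {K : Type*} [Field K]

theorem modByMonic_nodal_eq_interpolate {ι : Type*} [DecidableEq ι] {s : Finset ι} {v : ι → K}
    (hv : Set.InjOn v s) (f : K[X]) :
    f %ₘ Lagrange.nodal s v = Lagrange.interpolate s v fun i ↦ f.eval (v i) := by
  apply Lagrange.eq_interpolate_of_eval_eq _ hv
  · rw [← Lagrange.degree_nodal (v := v)]
    exact degree_modByMonic_lt _ Lagrange.nodal_monic
  · intro i hi
    have h := congrArg (eval (v i)) (modByMonic_add_div f (Lagrange.nodal s v))
    rwa [eval_add, eval_mul, Lagrange.eval_nodal_at_node hi, zero_mul, add_zero] at h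

theorem map_modByMonic_nodal {ι : Type*} [DecidableEq ι] {s : Finset ι} {v : ι → K}
    (hv : Set.InjOn v s) (ψ : K[X] →ₗ[K] K) (f : K[X]) :
    ψ (f %ₘ Lagrange.nodal s v) = ∑ i ∈ s, ψ (Lagrange.basis s v i) * f.eval (v i) := by
  simp only [modByMonic_nodal_eq_interpolate hv, Lagrange.interpolate_apply, map_sum,
    ← smul_eq_C_mul, map_smul, smul_eq_mul]
  exact Finset.sum_congr rfl fun i _ ↦ mul_comm _ _

theorem map_modByMonic_eq_of_natDegree_le {φ : K[X] →ₗ[K] K} {d : ℕ} {g : K[X]} (hg : g.Monic)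
    (hφ : ∀ f : K[X], g.natDegree + f.natDegree ≤ d → φ (g * f) = 0) {f : K[X]}
    (hf : f.natDegree ≤ d) : φ (f %ₘ g) = φ f := by
  suffices h : φ (g * (f /ₘ g)) = 0 by
    rw [← congrArg φ (modByMonic_add_div f g), map_add, h, add_zero]
  rcases lt_or_ge f.natDegree g.natDegree with hlt | hge
  · rw [(divByMonic_eq_zero_iff hg).2 (degree_lt_degree hlt), mul_zero, map_zero]
  · exact hφ _ (by rw [natDegree_divByMonic f hg]; omega)

theorem map_modByMonic_eq_of_mem_apolarIdeal {ψ : K[X] →ₗ[K] K} {g : K[X]}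
    (hg : g ∈ apolarIdeal ψ) (f : K[X]) : ψ (f %ₘ g) = ψ f := by
  rw [← congrArg ψ (modByMonic_add_div f g), map_add, mem_apolarIdeal.1 hg, add_zero]

theorem exists_monic_apolarIdeal_eq_span {ψ : K[X] →ₗ[K] K} {g₀ : K[X]} (hg₀ : g₀ ∈ apolarIdeal ψ)
    (h0 : g₀ ≠ 0) :
    ∃ g : K[X], g.Monic ∧ g.natDegree ≤ g₀.natDegree ∧ apolarIdeal ψ = Ideal.span {g} := by
  classical
  obtain ⟨g₁, hg₁⟩ := (IsPrincipalIdealRing.principal (apolarIdeal ψ)).principal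
  have hdvd : g₁ ∣ g₀ := by
    rw [← Ideal.mem_span_singleton, ← Ideal.submodule_span_eq, ← hg₁]
    exact hg₀
  refine ⟨normalize g₁, monic_normalize (ne_zero_of_dvd_ne_zero h0 hdvd), ?_, ?_⟩
  · exact natDegree_le_of_dvd (normalize_dvd_iff.2 hdvd) h0
  · rw [hg₁]
    exact Ideal.span_singleton_eq_span_singleton.2 (associated_normalize g₁)

-- `ψ f = φ (f mod g₀)` extends `φ` from degree at most `d` and is annihilated by `g₀`.
theorem exists_extension_of_forall_mul_eq_zero {φ : K[X] →ₗ[K] K} {d : ℕ} {g₀ : K[X]}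
    (hg₀ : g₀.Monic) (hφ : ∀ f : K[X], g₀.natDegree + f.natDegree ≤ d → φ (g₀ * f) = 0) :
    ∃ (ψ : K[X] →ₗ[K] K) (g : K[X]), g.Monic ∧ g.natDegree ≤ g₀.natDegree ∧
      apolarIdeal ψ = Ideal.span {g} ∧ ∀ f : K[X], f.natDegree ≤ d → ψ f = φ f := by
  have hmem : g₀ ∈ apolarIdeal (φ ∘ₗ modByMonicHom g₀) := fun h ↦ by
    rw [LinearMap.comp_apply, modByMonicHom_apply,
      (modByMonic_eq_zero_iff_dvd hg₀).2 (dvd_mul_right _ _), map_zero]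
  obtain ⟨g, hg, hdeg, hspan⟩ := exists_monic_apolarIdeal_eq_span hmem hg₀.ne_zero
  exact ⟨_, g, hg, hdeg, hspan, fun f ↦ map_modByMonic_eq_of_natDegree_le hg₀ hφ⟩

theorem mem_apolarIdeal_of_forall_degreeLT {ψ : K[X] →ₗ[K] K} {g : K[X]} (hg : g.Monic)
    (hψ : g ∈ apolarIdeal ψ) {f : K[X]} (hf : ∀ p ∈ degreeLT K g.natDegree, ψ (f * p) = 0) :
    f ∈ apolarIdeal ψ := by
  intro h
  have hmod : h %ₘ g ∈ degreeLT K g.natDegree := by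
    rw [mem_degreeLT, ← degree_eq_natDegree hg.ne_zero]
    exact degree_modByMonic_lt h hg
  rw [← congrArg (f * ·) (modByMonic_add_div h g), mul_add, map_add, hf _ hmod, mul_left_comm,
    mem_apolarIdeal.1 hψ, add_zero]

/-- The pairing `(f, p) ↦ φ (f * p)` between polynomials of degree less than `a` and less than `b`;
the `a × b` Hankel matrix of `φ` is its matrix in the monomial bases. -/
noncomputable def hankelPairing (φ : K[X] →ₗ[K] K) (a b : ℕ) :
    degreeLT K a →ₗ[K] Module.Dual K (degreeLT K b) :=
  (((LinearMap.mul K K[X]).compr₂ φ).compl₂ (degreeLT K b).subtype).comp (degreeLT K a).subtype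

theorem hankelPairing_apply (φ : K[X] →ₗ[K] K) {a b : ℕ} (f : degreeLT K a) (p : degreeLT K b) :
    hankelPairing φ a b f p = φ (f * p) :=
  rfl

theorem finrank_degreeLT (n : ℕ) : Module.finrank K (degreeLT K n) = n := by
  rw [(degreeLTEquiv K n).finrank_eq, Module.finrank_fin_fun]

instance finiteDimensional_degreeLT (n : ℕ) : FiniteDimensional K (degreeLT K n) :=
  (degreeLTEquiv K n).symm.finiteDimensional

theorem exists_ne_zero_forall_map_mul_eq_zero (φ : K[X] →ₗ[K] K) {a b : ℕ} (hab : b < a) :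
    ∃ q ∈ degreeLT K a, q ≠ 0 ∧ ∀ f ∈ degreeLT K b, φ (q * f) = 0 := by
  have hker : LinearMap.ker (hankelPairing φ a b) ≠ ⊥ := by
    apply LinearMap.ker_ne_bot_of_finrank_lt
    rwa [Subspace.dual_finrank_eq, finrank_degreeLT, finrank_degreeLT]
  obtain ⟨q, hq, hq0⟩ := Submodule.exists_mem_ne_zero_of_ne_bot hker
  refine ⟨q, q.2, Subtype.coe_ne_coe.2 hq0, fun f hf ↦ ?_⟩
  rw [← hankelPairing_apply φ q ⟨f, hf⟩, LinearMap.mem_ker.1 hq, LinearMap.zero_apply]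

theorem hankelPairing_injective {ψ : K[X] →ₗ[K] K} {g : K[X]} (hg : g.Monic)
    (hψ : apolarIdeal ψ = Ideal.span {g}) :
    Function.Injective (hankelPairing ψ g.natDegree g.natDegree) := by
  refine (injective_iff_map_eq_zero _).2 fun f hf ↦ Subtype.ext ?_
  have hfmem : (f : K[X]) ∈ apolarIdeal ψ :=
    mem_apolarIdeal_of_forall_degreeLT hg (hψ ▸ Ideal.mem_span_singleton_self g)
      fun p hp ↦ by rw [← hankelPairing_apply ψ f ⟨p, hp⟩, hf, LinearMap.zero_apply]
  rw [hψ, Ideal.mem_span_singleton] at hfmem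
  refine eq_zero_of_dvd_of_degree_lt hfmem ?_
  rw [degree_eq_natDegree hg.ne_zero]
  exact mem_degreeLT.1 f.2

theorem exists_degree_lt_forall_map_mul_eq {ψ : K[X] →ₗ[K] K} {g : K[X]} (hg : g.Monic)
    (hψ : apolarIdeal ψ = Ideal.span {g}) (φ : K[X] →ₗ[K] K) :
    ∃ u : K[X], u.degree < g.degree ∧ ∀ p : K[X], p.degree < g.degree → ψ (u * p) = φ p := by
  simp only [degree_eq_natDegree hg.ne_zero, ← mem_degreeLT]
  obtain ⟨u, hu⟩ := (LinearMap.injective_iff_surjective_of_finrank_eq_finrank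
    Subspace.dual_finrank_eq.symm).1 (hankelPairing_injective hg hψ)
    (φ ∘ₗ (degreeLT K g.natDegree).subtype)
  exact ⟨u, u.2, fun p hp ↦ by rw [← hankelPairing_apply ψ u ⟨p, hp⟩, hu]; rfl⟩

-- If `e` is a nonconstant common divisor and `g = e * g'`, then `u * g' * X ^ (deg e - 1)` is a
-- multiple of `g`, while `ψ` maps it to the leading coefficient of `g'`.
theorem isCoprime_of_map_mul_eq_coeff {ψ : K[X] →ₗ[K] K} {g u : K[X]} (hg : g.Monic)
    (hψ : g ∈ apolarIdeal ψ)
    (hu : ∀ p : K[X], p.degree < g.degree → ψ (u * p) = p.coeff (g.natDegree - 1)) :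
    IsCoprime g u := by
  refine isCoprime_of_dvd _ _ (fun h ↦ hg.ne_zero h.1) ?_
  rintro e he he0 ⟨g', rfl⟩ ⟨u', rfl⟩
  have hg'0 : g' ≠ 0 := right_ne_zero_of_mul hg.ne_zero
  have he1 : 0 < e.natDegree := by
    refine Nat.pos_of_ne_zero fun h ↦ he ?_
    obtain ⟨x, rfl⟩ := natDegree_eq_zero.1 h
    exact isUnit_C.2 (isUnit_iff_ne_zero.2 fun hx ↦ he0 (by rw [hx, C_0]))
  have hdeg : (e * g').natDegree = e.natDegree + g'.natDegree := natDegree_mul he0 hg'0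
  have hp : (g' * X ^ (e.natDegree - 1)).natDegree = (e * g').natDegree - 1 := by
    rw [natDegree_mul_X_pow _ hg'0, hdeg]
    omega
  have hlead : (g' * X ^ (e.natDegree - 1)).leadingCoeff = 0 := by
    rw [leadingCoeff, hp, ← hu _ (degree_lt_degree (by omega)),
      ← mem_apolarIdeal.1 hψ (u' * X ^ (e.natDegree - 1))]
    congr 1
    ring
  exact hg'0 (by simpa using hlead)

theorem exists_isCoprime_forall_map_mul_eq_zero {ψ : K[X] →ₗ[K] K} {g : K[X]} (hg : g.Monic)
    (hψ : apolarIdeal ψ = Ideal.span {g}) :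
    ∃ u : K[X], u.degree < g.degree ∧ IsCoprime g u ∧
      ∀ p : K[X], p.natDegree + 2 ≤ g.natDegree → ψ (u * p) = 0 := by
  obtain ⟨u, hdeg, hu⟩ := exists_degree_lt_forall_map_mul_eq hg hψ (lcoeff K (g.natDegree - 1))
  refine ⟨u, hdeg, isCoprime_of_map_mul_eq_coeff hg (hψ ▸ Ideal.mem_span_singleton_self g) hu, ?_⟩
  intro p hp
  rw [hu p (degree_lt_degree (by omega))]
  exact coeff_eq_zero_of_natDegree_lt (by omega)

theorem exists_eval_ne_zero [Infinite K] {f : K[X]} (hf : f ≠ 0) : ∃ x, f.eval x ≠ 0 := by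
  contrapose! hf
  exact funext fun x ↦ by rw [hf, eval_zero]

theorem isCoprime_mul_X_sub_C_pow {g u : K[X]} (h : IsCoprime g u) {a : K} (ha : u.eval a ≠ 0)
    (k : ℕ) : IsCoprime (g * (X - C a) ^ k) u := by
  refine h.mul_left (IsCoprime.pow_left ?_)
  rwa [(irreducible_X_sub_C a).coprime_iff_not_dvd, dvd_iff_isRoot]

-- The multiple roots of a member `v + c u` of the pencil are roots of the Wronskian of `v` and `u`,
-- and each point of the line is a root of at most one member.
theorem exists_separable_add_C_mul [CharZero K] [IsAlgClosed K] {v u : K[X]} (hu0 : u ≠ 0)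
    (hvu : IsCoprime v u) (hdeg : u.degree < v.degree) : ∃ c : K, (v + C c * u).Separable := by
  classical
  have hW : wronskian v u ≠ 0 := by
    rw [Ne, hvu.wronskian_eq_zero_iff, derivative_eq_zero]
    rintro ⟨h, -⟩
    have := natDegree_lt_natDegree hu0 hdeg
    omega
  obtain ⟨c, hc⟩ := Infinite.exists_notMem_finset
    ((wronskian v u).roots.toFinset.image fun z ↦ -v.eval z / u.eval z)
  refine ⟨c, (isCoprime_iff_aeval_ne_zero_of_isAlgClosed K K _ _).2 fun z ↦ ?_⟩
  simp only [coe_aeval_eq_eval]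
  by_contra! h
  simp only [derivative_add, derivative_C_mul, eval_add, eval_mul, eval_C] at h
  have hWz : (wronskian v u).eval z = 0 := by
    simp only [wronskian, eval_sub, eval_mul]
    linear_combination (derivative u).eval z * h.1 - u.eval z * h.2
  have huz : u.eval z ≠ 0 := by
    intro huz
    rw [huz, mul_zero, add_zero] at h
    obtain ⟨a, b, hab⟩ := hvu
    simpa [huz, h.1] using congrArg (eval z) hab
  refine hc (Finset.mem_image.2 ⟨z, Multiset.mem_toFinset.2 ((mem_roots hW).2 hWz), ?_⟩)
  rw [div_eq_iff huz]
  linear_combination -h.1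

theorem exists_nodal_eq_of_separable [IsAlgClosed K] {p : K[X]} (hp : p.Monic)
    (hsep : p.Separable) : ∃ Z : Finset K, Lagrange.nodal Z id = p := by
  classical
  refine ⟨p.roots.toFinset, ?_⟩
  rw [Lagrange.nodal_eq, Finset.prod_eq_multiset_prod, Multiset.toFinset_val,
    Multiset.dedup_eq_self.2 (nodup_roots hsep)]
  exact ((IsAlgClosed.splits p).eq_prod_roots_of_monic hp).symm

theorem exists_map_eq_sum_of_isCoprime [CharZero K] [IsAlgClosed K] {ψ : K[X] →ₗ[K] K} {d : ℕ}
    {v u : K[X]} (hv : v.Monic) (hu0 : u ≠ 0) (hvu : IsCoprime v u) (hdeg : u.degree < v.degree)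
    (hψv : v ∈ apolarIdeal ψ) (hψu : ∀ p : K[X], v.natDegree + p.natDegree ≤ d → ψ (u * p) = 0) :
    ∃ (Z : Finset K) (c : K → K), Z.card = v.natDegree ∧
      ∀ f : K[X], f.natDegree ≤ d → ψ f = ∑ z ∈ Z, c z * f.eval z := by
  classical
  obtain ⟨c, hsep⟩ := exists_separable_add_C_mul hu0 hvu hdeg
  have hlt : (C c * u).degree < v.degree := by
    rw [← smul_eq_C_mul]
    exact (degree_smul_le c u).trans_lt hdeg
  obtain ⟨Z, hZ⟩ := exists_nodal_eq_of_separable (hv.add_of_left hlt) hsep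
  have hZcard : Z.card = v.natDegree := by
    rw [← Lagrange.natDegree_nodal (v := id), hZ,
      natDegree_eq_of_degree_eq (degree_add_eq_left_of_degree_lt hlt)]
  refine ⟨Z, fun z ↦ ψ (Lagrange.basis Z id z), hZcard, fun f hf ↦ ?_⟩
  refine Eq.trans ?_ (map_modByMonic_nodal Function.injective_id.injOn ψ f)
  refine (map_modByMonic_eq_of_natDegree_le Lagrange.nodal_monic (fun p hp ↦ ?_) hf).symm
  rw [Lagrange.natDegree_nodal, hZcard] at hp
  rw [hZ, add_mul, map_add, mem_apolarIdeal.1 hψv, mul_assoc, ← smul_eq_C_mul, map_smul, hψu p hp,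
    smul_zero, add_zero]

theorem exists_map_eq_sum_card_eq [CharZero K] [IsAlgClosed K] {ψ : K[X] →ₗ[K] K} {g : K[X]}
    (hg : g.Monic) (hψ : apolarIdeal ψ = Ideal.span {g}) {d : ℕ} (hd : 2 * g.natDegree ≤ d + 2) :
    ∃ (Z : Finset K) (c : K → K), Z.card = d + 2 - g.natDegree ∧
      ∀ f : K[X], f.natDegree ≤ d → ψ f = ∑ z ∈ Z, c z * f.eval z := by
  have hmem : g ∈ apolarIdeal ψ := hψ ▸ Ideal.mem_span_singleton_self g
  obtain ⟨u, hdeg, hgu, hu⟩ := exists_isCoprime_forall_map_mul_eq_zero hg hψ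
  rcases eq_or_ne u 0 with rfl | hu0
  · rw [isCoprime_zero_right] at hgu
    obtain ⟨Z, hZ⟩ := Infinite.exists_subset_card_eq K (d + 2 - g.natDegree)
    refine ⟨Z, 0, hZ, fun f _ ↦ ?_⟩
    rw [hg.eq_one_of_isUnit hgu] at hmem
    simpa only [one_mul, Pi.zero_apply, zero_mul, Finset.sum_const_zero]
      using mem_apolarIdeal.1 hmem f
  obtain ⟨a, ha⟩ := exists_eval_ne_zero hu0
  have hpow : ((X - C a) ^ (d + 2 - 2 * g.natDegree)).Monic := (monic_X_sub_C a).pow _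
  have hv : (g * (X - C a) ^ (d + 2 - 2 * g.natDegree)).natDegree = d + 2 - g.natDegree := by
    rw [hg.natDegree_mul hpow, (monic_X_sub_C a).natDegree_pow, natDegree_X_sub_C]
    omega
  rw [← hv]
  refine exists_map_eq_sum_of_isCoprime (hg.mul hpow) hu0 (isCoprime_mul_X_sub_C_pow hgu ha _)
    (hdeg.trans_le (degree_le_of_dvd (dvd_mul_right _ _) (hg.mul hpow).ne_zero))
    ((apolarIdeal ψ).mul_mem_right _ hmem) fun p hp ↦ hu p (by omega)

-- If `#L + deg g ≤ d + 1`, then testing on `g * ∏ j ≠ i, (X - y j)` shows that every node `y i` is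
-- a root of `g`.
theorem add_two_le_card_add_natDegree {ι : Type*} {L : Finset ι} {y c : ι → K}
    (hy : Set.InjOn y L) (hc : ∀ x ∈ L, c x ≠ 0) {ψ : K[X] →ₗ[K] K} {g : K[X]} (hg0 : g ≠ 0)
    (hg : g ∈ apolarIdeal ψ) {d : ℕ}
    (hψ : ∀ f : K[X], f.natDegree ≤ d → ψ f = ∑ x ∈ L, c x * f.eval (y x))
    (hlt : g.natDegree < L.card) : d + 2 ≤ L.card + g.natDegree := by
  classical
  by_contra! hcon
  refine hg0 (eq_zero_of_degree_lt_of_eval_index_eq_zero L hy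
    (natDegree_lt_iff_degree_lt hg0 |>.1 hlt) fun i hi ↦ ?_)
  have hdeg : (g * Lagrange.nodal (L.erase i) y).natDegree ≤ d := by
    rw [natDegree_mul hg0 Lagrange.nodal_ne_zero, Lagrange.natDegree_nodal,
      Finset.card_erase_of_mem hi]
    omega
  have hsum := hψ _ hdeg
  rw [mem_apolarIdeal.1 hg, Finset.sum_eq_single_of_mem i hi fun j hj hji ↦ by
    rw [eval_mul, Lagrange.eval_nodal_at_node (Finset.mem_erase.2 ⟨hji, hj⟩), mul_zero,
      mul_zero], eval_mul, zero_eq_mul, or_iff_right (hc i hi), mul_eq_zero] at hsum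
  refine hsum.resolve_right (Lagrange.eval_nodal_not_at_node fun j hj h ↦ ?_)
  exact (Finset.mem_erase.1 hj).1 (hy hi (Finset.mem_of_mem_erase hj) h).symm

theorem exists_mvPolynomial_eval_eq_map_modByMonic_nodal {ι : Type*} [Fintype ι]
    (ψ : K[X] →ₗ[K] K) (f : K[X]) :
    ∃ q : MvPolynomial ι K, ∀ Z : ι → K,
      MvPolynomial.eval Z q = ψ (f %ₘ Lagrange.nodal Finset.univ Z) := by
  let r : (MvPolynomial ι K)[X] :=
    f.map MvPolynomial.C %ₘ Lagrange.nodal Finset.univ MvPolynomial.X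
  have hr : ∀ Z : ι → K, r.map (MvPolynomial.eval Z) = f %ₘ Lagrange.nodal Finset.univ Z := by
    intro Z
    have hC : (MvPolynomial.eval Z).comp MvPolynomial.C = RingHom.id K :=
      RingHom.ext fun a ↦ MvPolynomial.eval_C a
    rw [map_modByMonic _ Lagrange.nodal_monic, map_map, hC, map_id]
    simp only [Lagrange.nodal, Polynomial.map_prod, Polynomial.map_sub, map_X, map_C,
      MvPolynomial.eval_X]
  refine ⟨∑ k ∈ r.support, MvPolynomial.C (ψ (X ^ k)) * r.coeff k, fun Z ↦ ?_⟩
  have hrZ : r.map (MvPolynomial.eval Z) =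
      ∑ k ∈ r.support, MvPolynomial.eval Z (r.coeff k) • X ^ k := by
    conv_lhs => rw [as_sum_support_C_mul_X_pow r]
    simp only [Polynomial.map_sum, Polynomial.map_mul, map_C, Polynomial.map_pow, map_X,
      smul_eq_C_mul]
  simp only [← hr, hrZ, map_sum, map_mul, MvPolynomial.eval_C, map_smul, smul_eq_mul, mul_comm]

theorem exists_nodal_univ_eq [IsAlgClosed K] {g : K[X]} (hg : g.Monic) :
    ∃ (n : ℕ) (α : Fin n → K), Lagrange.nodal Finset.univ α = g := by
  refine ⟨_, fun i ↦ g.roots.toList[i.1], ?_⟩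
  conv_rhs => rw [(IsAlgClosed.splits g).eq_prod_roots_of_monic hg, ← Multiset.prod_map_toList]
  exact Fin.prod_univ_fun_getElem g.roots.toList fun a ↦ X - C a

theorem mvPolynomial_eq_zero_of_forall_injective {ι : Type*} [Finite ι] [Infinite K]
    {p : MvPolynomial ι K}
    (hp : ∀ Z : ι → K, Function.Injective Z → MvPolynomial.eval Z p = 0) : p = 0 := by
  classical
  cases nonempty_fintype ι
  have hprod : p * ∏ i, ∏ j ∈ Finset.univ.erase i, (MvPolynomial.X i - MvPolynomial.X j) = 0 := by
    refine MvPolynomial.funext fun Z ↦ ?_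
    rw [map_mul, map_zero, mul_eq_zero]
    by_cases hZ : Function.Injective Z
    · exact Or.inl (hp Z hZ)
    · simp only [Function.Injective, not_forall] at hZ
      obtain ⟨i, j, hij, hne⟩ := hZ
      simp only [map_prod, Finset.prod_eq_zero_iff, map_sub, MvPolynomial.eval_X]
      exact Or.inr ⟨i, Finset.mem_univ i, j, by simp [Ne.symm hne], sub_eq_zero.2 hij⟩
  refine (mul_eq_zero.1 hprod).resolve_right ?_
  simp only [Finset.prod_eq_zero_iff, not_exists, not_and, sub_eq_zero]
  intro i _ j hj h
  exact (Finset.mem_erase.1 hj).1 (MvPolynomial.X_injective h).symm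

end Apolarity

section Veronese

open MvPolynomial

theorem eval_smul_of_isHomogeneous {σ R : Type*} [CommSemiring R] {F : MvPolynomial σ R} {k : ℕ}
    (hF : F.IsHomogeneous k) (c : R) (v : σ → R) : eval (c • v) F = c ^ k * eval v F := by
  rw [eval_eq, eval_eq, Finset.mul_sum]
  refine Finset.sum_congr rfl fun e he ↦ ?_
  have hdeg : ∑ i ∈ e.support, e i = k := by
    rw [← hF (mem_support_iff.1 he), Finsupp.weight_apply, Finsupp.sum]
    simp only [Pi.one_apply, smul_eq_mul, mul_one]
  simp only [Pi.smul_apply, smul_eq_mul, mul_pow, Finset.prod_mul_distrib,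
    Finset.prod_pow_eq_pow_sum, hdeg]
  ring

instance finite_homogeneousSubmodule {σ R : Type*} [Finite σ] [CommSemiring R] (k : ℕ) :
    Module.Finite R (homogeneousSubmodule σ R k) :=
  Module.Finite.iff_fg.2 (homogeneousSubmodule_fg σ R k)

variable {K : Type} [Field K] {m d : ℕ}

/-- The linear form on `ℙ^m` attached to a linear functional on the ambient vector space. -/
noncomputable def linearForm (φ : Module.Dual K (Fin (m + 1) → K)) : PR K m :=
  ∑ i, C (φ (Pi.single i 1)) * X i

theorem isHomogeneous_linearForm (φ : Module.Dual K (Fin (m + 1) → K)) :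
    (linearForm φ).IsHomogeneous 1 :=
  IsHomogeneous.sum _ _ _ fun i _ ↦ isHomogeneous_C_mul_X _ i

theorem eval_linearForm (φ : Module.Dual K (Fin (m + 1) → K)) (v : Fin (m + 1) → K) :
    eval v (linearForm φ) = φ v := by
  conv_rhs => rw [pi_eq_sum_univ' v, map_sum]
  simp only [linearForm, map_sum, map_mul, eval_C, eval_X, map_smul, smul_eq_mul]
  exact Finset.sum_congr rfl fun i _ ↦ mul_comm _ _

/-- Multiplication of forms `H⁰(𝒪(t)) × H⁰(𝒪(t')) → H⁰(𝒪(d))`, where `t + t' = d`. -/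
noncomputable def formMul {t t' : ℕ} (h : t + t' = d) (f : Hd K m t) (g : Hd K m t') : Hd K m d :=
  ⟨f * g, h ▸ ((mem_homogeneousSubmodule _ _).1 f.2).mul ((mem_homogeneousSubmodule _ _).1 g.2)⟩

theorem coe_formMul {t t' : ℕ} (h : t + t' = d) (f : Hd K m t) (g : Hd K m t') :
    (formMul h f g : PR K m) = f * g :=
  rfl

theorem nu_apply (v : Fin (m + 1) → K) (f : Hd K m d) : nu d v f = eval v (f : PR K m) := by
  simp [nu, aeval_eq_eval]

theorem nu_smul (c : K) (v : Fin (m + 1) → K) : nu d (c • v) = c ^ d • nu d v := by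
  ext f
  rw [nu_apply, eval_smul_of_isHomogeneous ((mem_homogeneousSubmodule _ _).1 f.2),
    LinearMap.smul_apply, nu_apply, smul_eq_mul]

theorem nu_ne_zero {v : Fin (m + 1) → K} (hv : v ≠ 0) : nu d v ≠ 0 := by
  obtain ⟨i, hi⟩ := Function.ne_iff.1 hv
  have h : nu d v ⟨X i ^ d, (mem_homogeneousSubmodule _ _).2 (by
      simpa only [one_mul] using (isHomogeneous_X K i).pow d)⟩ ≠ 0 := by
    rw [nu_apply, map_pow, eval_X]
    exact pow_ne_zero d hi
  exact fun h0 ↦ h (by rw [h0, LinearMap.zero_apply])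

theorem nu_mem_dualSpan {v : Fin (m + 1) → K} (hv : v ≠ 0) {S : Set (Pm K m)}
    (hS : Projectivization.mk K v hv ∈ S) : nu d v ∈ dualSpan d S := by
  obtain ⟨a, ha⟩ := Projectivization.exists_smul_eq_mk_rep K v hv
  have h : nu d v = ((a : K)⁻¹) ^ d • nu d (Projectivization.mk K v hv).rep := by
    rw [← nu_smul, ← ha, Units.smul_def, smul_smul, inv_mul_cancel₀ a.ne_zero, one_smul]
  exact h ▸ Submodule.smul_mem _ _ (Submodule.subset_span ⟨_, hS, rfl⟩)

/-- The Veronese embedding `ν_d : ℙ^m → ℙ^n`. -/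
noncomputable def veronese (d : ℕ) (a : Pm K m) : PN K m d :=
  Projectivization.mk K (nu d a.rep) (nu_ne_zero a.rep_nonzero)

theorem XSet_eq_range_veronese : XSet K m d = Set.range (veronese d) := by
  ext Q
  refine exists_congr fun a ↦ ?_
  rw [veronese, ← Projectivization.submodule_mk _ (nu_ne_zero a.rep_nonzero),
    Projectivization.submodule_injective.eq_iff, eq_comm]

theorem dualSpan_eq_span_rep_image (S : Set (Pm K m)) :
    dualSpan d S = Submodule.span K (Projectivization.rep '' (veronese d '' S)) := by
  have h (Q : PN K m d) : Q.submodule = Submodule.span K {Q.rep} := Q.submodule_eq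
  rw [dualSpan, Submodule.span_eq_iSup_of_singleton_spans,
    Submodule.span_eq_iSup_of_singleton_spans]
  simp only [iSup_image, ← h, veronese, Projectivization.submodule_mk]

theorem exists_finset_mem_span_iff {k : ℕ} {y : Module.Dual K (Hd K m d)} :
    (∃ S : Finset (PN K m d), ↑S ⊆ XSet K m d ∧ S.card ≤ k ∧
        y ∈ Submodule.span K (Projectivization.rep '' (S : Set (PN K m d)))) ↔
      ∃ B : Finset (Pm K m), B.card ≤ k ∧ y ∈ dualSpan d (B : Set (Pm K m)) := by
  classical
  simp only [dualSpan_eq_span_rep_image]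
  constructor
  · rintro ⟨S, hSX, hSk, hy⟩
    rw [XSet_eq_range_veronese, ← Set.image_univ] at hSX
    obtain ⟨B, -, hB, rfl⟩ := Finset.exists_subset_injOn_image_eq_of_surjOn _ S hSX
    exact ⟨B, by rwa [← Finset.card_image_of_injOn hB], by rwa [← Finset.coe_image]⟩
  · rintro ⟨B, hBk, hy⟩
    refine ⟨B.image (veronese d), ?_, Finset.card_image_le.trans hBk, ?_⟩
    · rw [XSet_eq_range_veronese, Finset.coe_image]
      exact Set.image_subset_range _ _
    · rwa [Finset.coe_image]

theorem srank_le_card {P : PN K m d} {B : Finset (Pm K m)}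
    (hP : P.rep ∈ dualSpan d (B : Set (Pm K m))) : srank d P ≤ B.card := by
  obtain ⟨S, hSX, hSB, hPS⟩ := exists_finset_mem_span_iff.2 ⟨B, le_rfl, hP⟩
  exact le_trans (Nat.sInf_le ⟨S, hSX, rfl, hPS⟩) hSB

theorem mem_dualSpan_iff {B : Finset (Pm K m)} {y : Module.Dual K (Hd K m d)} :
    y ∈ dualSpan d (B : Set (Pm K m)) ↔ ∃ l : Pm K m → K, y = ∑ a ∈ B, l a • nu d a.rep := by
  simp only [dualSpan, Submodule.mem_span_image_finset_iff_exists_fun', eq_comm]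

theorem exists_card_eq_srank {P : PN K m d} (hP : 0 < srank d P) :
    ∃ (B : Finset (Pm K m)) (l : Pm K m → K), B.card = srank d P ∧ (∀ a ∈ B, l a ≠ 0) ∧
      P.rep = ∑ a ∈ B, l a • nu d a.rep := by
  classical
  obtain ⟨S, hSX, hS, hPS⟩ := Nat.sInf_mem (Nat.nonempty_of_pos_sInf hP)
  obtain ⟨B, hB, hPB⟩ := exists_finset_mem_span_iff.1 ⟨S, hSX, hS.le, hPS⟩
  obtain ⟨l, hl⟩ := mem_dualSpan_iff.1 hPB
  have hl' : P.rep = ∑ a ∈ B with l a ≠ 0, l a • nu d a.rep := by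
    rw [hl, Finset.sum_filter_of_ne]
    exact fun a _ h h0 ↦ h (by rw [h0, zero_smul])
  refine ⟨B.filter (l · ≠ 0), l, le_antisymm ((Finset.card_filter_le _ _).trans hB) ?_,
    fun a ha ↦ (Finset.mem_filter.1 ha).2, hl'⟩
  exact srank_le_card (mem_dualSpan_iff.2 ⟨l, hl'⟩)

theorem mem_secantWrt_iff {P : PN K m d} {k : ℕ} (hk : 0 < k) :
    P ∈ secantWrt (XSet K m d) k ↔
      ∀ F ∈ polyFunctions K (Module.Dual K (Hd K m d)),
        (∀ B : Finset (Pm K m), B.card ≤ k → ∀ y ∈ dualSpan d (B : Set (Pm K m)), F y = 0) →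
          ∀ c : K, F (c • P.rep) = 0 := by
  simp only [secantWrt, zClosure, exists_finset_mem_span_iff]
  refine forall₂_congr fun F _ ↦ imp_congr_left ⟨fun h ↦ ?_, ?_⟩
  · have h_zero : F 0 = 0 := by
      obtain ⟨a⟩ := (inferInstance : Nonempty (Pm K m))
      have ha := h (veronese d a) ⟨{a}, by rwa [Finset.card_singleton], ?_⟩ 0
      · rwa [zero_smul] at ha
      · rw [Finset.coe_singleton, dualSpan_eq_span_rep_image, Set.image_singleton,
          Set.image_singleton]
        exact Submodule.mem_span_singleton_self _
    intro B hB y hy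
    rcases eq_or_ne y 0 with rfl | hy0
    · exact h_zero
    obtain ⟨e, he⟩ := Projectivization.exists_smul_eq_mk_rep K y hy0
    have hF := h (.mk K y hy0) ⟨B, hB, he ▸ Submodule.smul_mem _ (e : K) hy⟩ (e⁻¹ : Kˣ)
    rwa [← he, ← Units.smul_def, inv_smul_smul] at hF
  · rintro h Q ⟨B, hB, hQ⟩ c
    exact h B hB _ (Submodule.smul_mem _ c hQ)

theorem mem_secantWrt_brank {P : PN K m d} (hP : 0 < brank d P) :
    P ∈ secantWrt (XSet K m d) (brank d P) :=
  (Nat.sInf_mem (Nat.nonempty_of_pos_sInf hP)).2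

theorem brank_le {P : PN K m d} {k : ℕ} (hk : 0 < k) (hP : P ∈ secantWrt (XSet K m d) k) :
    brank d P ≤ k :=
  Nat.sInf_le ⟨hk, hP⟩

theorem mem_polyFunctions_det {V ι : Type} [AddCommGroup V] [Module K V] [Fintype ι]
    [DecidableEq ι] (A : ι → ι → Module.Dual K V) :
    (fun y ↦ (Matrix.of fun i j ↦ A i j y).det) ∈ polyFunctions K V := by
  have h_det : (fun y ↦ (Matrix.of fun i j ↦ A i j y).det) =
      ∑ σ : Equiv.Perm ι, Equiv.Perm.sign σ • ∏ i, ⇑(A (σ i) i) := by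
    ext y
    simp only [Matrix.det_apply, Finset.sum_apply, Pi.smul_apply, Finset.prod_apply,
      Matrix.of_apply]
  rw [h_det]
  refine Subalgebra.sum_mem _ fun σ _ ↦ zsmul_mem (Subalgebra.prod_mem _ fun i _ ↦ ?_) _
  exact Algebra.subset_adjoin ⟨A (σ i) i, rfl⟩

theorem det_formMul_eq_zero {t t' : ℕ} (h : t + t' = d) {ι : Type*} [Fintype ι] [DecidableEq ι]
    {B : Finset (Pm K m)} (hB : B.card < Fintype.card ι) {y : Module.Dual K (Hd K m d)}
    (hy : y ∈ dualSpan d (B : Set (Pm K m))) (f : ι → Hd K m t) (g : ι → Hd K m t') :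
    (Matrix.of fun i j ↦ y (formMul h (f i) (g j))).det = 0 := by
  obtain ⟨l, rfl⟩ := mem_dualSpan_iff.1 hy
  set M : Matrix ι B K := .of fun i a ↦ l a * eval a.1.rep (f i : PR K m)
  set N : Matrix B ι K := .of fun a j ↦ eval a.1.rep (g j : PR K m)
  have hMN : (Matrix.of fun i j ↦ (∑ a ∈ B, l a • nu d a.rep) (formMul h (f i) (g j))) = M * N := by
    ext i j
    simp only [M, N, Matrix.of_apply, Matrix.mul_apply, LinearMap.sum_apply, LinearMap.smul_apply,
      nu_apply, smul_eq_mul, coe_formMul, map_mul, ← Finset.sum_coe_sort B, mul_assoc]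
  rw [hMN]
  by_contra h_det
  have h_rank := Matrix.rank_of_isUnit _ ((Matrix.isUnit_iff_isUnit_det _).2 (Ne.isUnit h_det))
  have h_le := (Matrix.rank_mul_le_left M N).trans (Matrix.rank_le_card_width M)
  rw [Fintype.card_coe] at h_le
  omega

theorem card_le_of_det_formMul_ne_zero {P : PN K m d} {k : ℕ} (hk : 0 < k)
    (hP : P ∈ secantWrt (XSet K m d) k) {t t' : ℕ} (h : t + t' = d) {ι : Type} [Fintype ι]
    [DecidableEq ι] {f : ι → Hd K m t} {g : ι → Hd K m t'}
    (h_det : (Matrix.of fun i j ↦ P.rep (formMul h (f i) (g j))).det ≠ 0) :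
    Fintype.card ι ≤ k := by
  by_contra! hkι
  refine h_det ?_
  simpa only [one_smul, Module.Dual.eval_apply] using (mem_secantWrt_iff hk).1 hP _
    (mem_polyFunctions_det fun i j ↦ Module.Dual.eval K _ (formMul h (f i) (g j)))
    (fun B hB y hy ↦ det_formMul_eq_zero h (hB.trans_lt hkι) hy f g) 1

theorem exists_mvPolynomial_eval_eq_of_mem_polyFunctions {V ι : Type} [AddCommGroup V] [Module K V]
    {γ : (ι → K) → V} (hγ : ∀ φ : Module.Dual K V, ∃ p : MvPolynomial ι K, ∀ z, eval z p = φ (γ z))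
    {F : V → K} (hF : F ∈ polyFunctions K V) :
    ∃ p : MvPolynomial ι K, ∀ z, eval z p = F (γ z) := by
  induction hF using Algebra.adjoin_induction with
  | mem F hF =>
    obtain ⟨φ, rfl⟩ := hF
    exact hγ φ
  | algebraMap c => exact ⟨C c, fun z ↦ eval_C c⟩
  | add F G _ _ hF hG =>
    obtain ⟨p, hp⟩ := hF
    obtain ⟨q, hq⟩ := hG
    exact ⟨p + q, fun z ↦ by rw [map_add, hp, hq, Pi.add_apply]⟩
  | mul F G _ _ hF hG =>
    obtain ⟨p, hp⟩ := hF
    obtain ⟨q, hq⟩ := hG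
    exact ⟨p * q, fun z ↦ by rw [map_mul, hp, hq, Pi.mul_apply]⟩

end Veronese

section Lines

open MvPolynomial

variable {K : Type} [Field K] {m d : ℕ}

/-- The linear subspace whose projectivization is the line through two distinct points. -/
def lineThrough (p a : Pm K m) : Submodule K (Fin (m + 1) → K) :=
  Submodule.span K {p.rep, a.rep}

theorem rep_left_mem_lineThrough (p a : Pm K m) : p.rep ∈ lineThrough p a :=
  Submodule.subset_span (Set.mem_insert _ _)

theorem rep_right_mem_lineThrough (p a : Pm K m) : a.rep ∈ lineThrough p a :=
  Submodule.subset_span (Set.mem_insert_of_mem _ rfl)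

theorem finrank_lineThrough {p a : Pm K m} (h : p ≠ a) :
    Module.finrank K (lineThrough p a) = 2 := by
  have hli := Projectivization.linearIndependent_pair_iff_ne.2 h
  rw [lineThrough, ← Matrix.range_cons_cons_empty p.rep a.rep ![], finrank_span_eq_card hli,
    Fintype.card_fin]

theorem lineThrough_eq_of_mem {p a x y : Pm K m} (hpa : p ≠ a) (hxy : x ≠ y)
    (hx : x.rep ∈ lineThrough p a) (hy : y.rep ∈ lineThrough p a) :
    lineThrough x y = lineThrough p a :=
  Submodule.eq_of_le_of_finrank_le (Submodule.span_le.2 (Set.pair_subset hx hy))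
    (by rw [finrank_lineThrough hpa, finrank_lineThrough hxy])

theorem rep_notMem_span_singleton {p a : Pm K m} (h : p ≠ a) :
    p.rep ∉ Submodule.span K {a.rep} := by
  intro hp
  have h_le : lineThrough p a ≤ Submodule.span K {a.rep} :=
    Submodule.span_le.2 (Set.pair_subset hp (Submodule.mem_span_singleton_self _))
  have h_fin := Submodule.finrank_mono h_le
  rw [finrank_lineThrough h, finrank_span_singleton a.rep_nonzero] at h_fin
  omega

theorem rep_notMem_span_of_card_le_two {p : Pm K m} {S : Finset (Pm K m)} (hp : p ∉ S)
    (hS : S.card ≤ 2) (hinj : Set.InjOn (lineThrough p) S) :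
    p.rep ∉ Submodule.span K (Projectivization.rep '' (S : Set (Pm K m))) := by
  classical
  interval_cases hc : S.card
  · rw [Finset.card_eq_zero.1 hc]
    simpa using p.rep_nonzero
  · obtain ⟨x, rfl⟩ := Finset.card_eq_one.1 hc
    simpa using rep_notMem_span_singleton (by simpa using hp : p ≠ x)
  · obtain ⟨x, y, hxy, hS'⟩ := Finset.card_eq_two.1 hc
    subst hS'
    obtain ⟨hpx, hpy⟩ : p ≠ x ∧ p ≠ y := by simpa [not_or] using hp
    intro hmem
    replace hmem : p.rep ∈ lineThrough x y := by simpa [lineThrough, Set.image_pair] using hmem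
    refine hxy (hinj (by simp) (by simp) ?_)
    rw [lineThrough_eq_of_mem hxy hpx hmem (rep_left_mem_lineThrough x y),
      lineThrough_eq_of_mem hxy hpy hmem (rep_right_mem_lineThrough x y)]

theorem exists_dual_eq_one_of_notMem {V : Type*} [AddCommGroup V] [Module K V] {W : Submodule K V}
    {v : V} (hv : v ∉ W) : ∃ φ : Module.Dual K V, φ v = 1 ∧ ∀ w ∈ W, φ w = 0 := by
  obtain ⟨φ, hφv, hφW⟩ := Submodule.exists_le_ker_of_notMem hv
  exact ⟨(φ v)⁻¹ • φ, inv_mul_cancel₀ hφv, fun w hw ↦ by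
    rw [LinearMap.smul_apply, hφW hw, smul_zero]⟩

/-- The points of `B` impose independent conditions on forms of degree `t`: each point of `B` is
separated from the others by such a form. -/
def ImposesIndependentConditions (t : ℕ) (B : Finset (Pm K m)) : Prop :=
  ∀ p ∈ B, ∃ F : Hd K m t, nu t p.rep F = 1 ∧ ∀ x ∈ B, x ≠ p → nu t x.rep F = 0

theorem exists_injOn_index_of_card_fiber_le {α β : Type*} [DecidableEq β] {t : ℕ} {X : Finset α}
    {c : α → β} (hc : ∀ b, (X.filter (c · = b)).card ≤ t) :
    ∃ n : α → ℕ, (∀ x ∈ X, n x < X.card) ∧ Set.InjOn n X ∧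
      ∀ x ∈ X, ∀ y ∈ X, c x = c y → n y < n x + t := by
  let : LinearOrder α := IsWellOrder.linearOrder WellOrderingRel
  let : LinearOrder β := IsWellOrder.linearOrder WellOrderingRel
  let e (x : α) : β ×ₗ α := toLex (c x, x)
  have he : Function.Injective e := fun x y h ↦ congrArg (fun z ↦ (ofLex z).2) h
  let n (x : α) : ℕ := (X.filter (e · < e x)).card
  have hn {x y : α} (hx : x ∈ X) (h : e x < e y) : n x < n y := by
    refine Finset.card_lt_card ⟨fun z hz ↦ ?_, fun hyx ↦ ?_⟩
    · obtain ⟨hzX, hzx⟩ := Finset.mem_filter.1 hz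
      exact Finset.mem_filter.2 ⟨hzX, hzx.trans h⟩
    · exact (Finset.mem_filter.1 (hyx (Finset.mem_filter.2 ⟨hx, h⟩))).2.false
  refine ⟨n, fun x hx ↦ ?_, fun x hx y hy hxy ↦ ?_, fun x _ y hy hxy ↦ ?_⟩
  · exact Finset.card_lt_card (Finset.filter_ssubset.2 ⟨x, hx, lt_irrefl _⟩)
  · by_contra hne
    rcases lt_or_gt_of_ne (he.ne hne) with h | h
    exacts [(hn hx h).ne hxy, (hn hy h).ne' hxy]
  · have hy' : y ∈ X.filter (c · = c y) := Finset.mem_filter.2 ⟨hy, rfl⟩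
    have h_sub : X.filter (e · < e y) ⊆
        X.filter (e · < e x) ∪ (X.filter (c · = c y)).erase y := by
      intro z hz
      simp only [Finset.mem_union, Finset.mem_filter, Finset.mem_erase, e, Prod.Lex.toLex_lt_toLex,
        hxy] at hz ⊢
      rcases hz with ⟨hzX, h | ⟨h, hlt⟩⟩
      · exact .inl ⟨hzX, .inl h⟩
      · exact .inr ⟨hlt.ne, hzX, h⟩
    have h_card := (Finset.card_le_card h_sub).trans (Finset.card_union_le _ _)
    have h_pos := Finset.card_pos.2 ⟨y, hy'⟩
    have h_le := hc (c y)
    rw [Finset.card_erase_of_mem hy'] at h_card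
    change (X.filter (e · < e y)).card < (X.filter (e · < e x)).card + t
    omega

-- Sort `X` by colour and put the element of index `j` into the class `j % t`: two elements of one
-- class are at least `t` apart, so they would bound a run of `t + 1` elements of the same colour.
theorem exists_coloring_pairs {α β : Type*} [DecidableEq β] {t : ℕ} {X : Finset α} {c : α → β}
    (hX : X.card ≤ 2 * t) (hc : ∀ b, (X.filter (c · = b)).card ≤ t) :
    ∃ f : α → ℕ, (∀ x ∈ X, f x < t) ∧ (∀ i, (X.filter (f · = i)).card ≤ 2) ∧
      ∀ x ∈ X, ∀ y ∈ X, f x = f y → c x = c y → x = y := by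
  obtain ⟨n, hn, hinj, hrun⟩ := exists_injOn_index_of_card_fiber_le hc
  have h_div (x) (hx : x ∈ X) : n x / t < 2 :=
    Nat.div_lt_of_lt_mul ((hn x hx).trans_le (by rwa [mul_comm] at hX))
  refine ⟨fun x ↦ n x % t, fun x hx ↦ Nat.mod_lt _ ?_, fun i ↦ ?_, fun x hx y hy hxy hcxy ↦ ?_⟩
  · have := hn x hx
    omega
  · rw [← Finset.card_range 2]
    refine Finset.card_le_card_of_injOn (fun x ↦ n x / t) (fun x hx ↦ ?_) fun x hx y hy hxy ↦ ?_
    · exact Finset.mem_coe.2 (Finset.mem_range.2 (h_div x (Finset.mem_filter.1 hx).1))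
    · obtain ⟨hx, hxi⟩ := Finset.mem_filter.1 hx
      obtain ⟨hy, hyi⟩ := Finset.mem_filter.1 hy
      apply hinj hx hy
      rw [← Nat.div_add_mod (n x) t, ← Nat.div_add_mod (n y) t]
      exact congrArg₂ (t * · + ·) hxy (hxi.trans hyi.symm)
  · have h₁ := hrun x hx y hy hcxy
    have h₂ := hrun y hy x hx hcxy.symm
    apply hinj hx hy
    exact Nat.ModEq.eq_of_abs_lt hxy (by rw [abs_lt]; omega)

open scoped Classical in
theorem exists_form_eq_one_of_card_le {t : ℕ} {p : Pm K m} {X : Finset (Pm K m)} (hp : p ∉ X)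
    (hX : X.card ≤ 2 * t) (hline : ∀ W, (X.filter (lineThrough p · = W)).card ≤ t) :
    ∃ F : Hd K m t, nu t p.rep F = 1 ∧ ∀ x ∈ X, nu t x.rep F = 0 := by
  obtain ⟨f, hft, hf₂, hf⟩ := exists_coloring_pairs hX hline
  have h_fiber (i : ℕ) : ∃ φ : Module.Dual K (Fin (m + 1) → K), φ p.rep = 1 ∧
      ∀ x ∈ X, f x = i → φ x.rep = 0 := by
    have h_notMem := rep_notMem_span_of_card_le_two (p := p) (S := X.filter (f · = i))
      (fun h ↦ hp (Finset.mem_filter.1 h).1) (hf₂ i) fun x hx y hy h ↦ by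
        rw [Finset.mem_coe, Finset.mem_filter] at hx hy
        exact hf x hx.1 y hy.1 (hx.2.trans hy.2.symm) h
    obtain ⟨φ, hφp, hφ⟩ := exists_dual_eq_one_of_notMem h_notMem
    exact ⟨φ, hφp, fun x hx hxi ↦ hφ _ (Submodule.subset_span ⟨x, by simp [hx, hxi], rfl⟩)⟩
  choose φ hφp hφ using h_fiber
  have h_hom : (∏ i ∈ Finset.range t, linearForm (φ i)).IsHomogeneous t := by
    simpa using IsHomogeneous.prod (Finset.range t) (fun i ↦ linearForm (φ i)) (fun _ ↦ 1)
      fun i _ ↦ isHomogeneous_linearForm (φ i)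
  have h_eval (v : Fin (m + 1) → K) :
      nu t v ⟨_, (mem_homogeneousSubmodule _ _).2 h_hom⟩ = ∏ i ∈ Finset.range t, φ i v := by
    simp only [nu_apply, map_prod, eval_linearForm]
  refine ⟨⟨_, (mem_homogeneousSubmodule _ _).2 h_hom⟩, ?_, fun x hx ↦ ?_⟩
  · rw [h_eval, Finset.prod_congr rfl fun i _ ↦ hφp i, Finset.prod_const_one]
  · rw [h_eval, Finset.prod_eq_zero (Finset.mem_range.2 (hft x hx)) (hφ _ x hx rfl)]

open scoped Classical in
theorem imposesIndependentConditions_of_card_line_le {t : ℕ} {B : Finset (Pm K m)}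
    (hB : B.card ≤ 2 * t + 1)
    (hline : ∀ p ∈ B, ∀ a ∈ B, p ≠ a → (B.filter (·.rep ∈ lineThrough p a)).card ≤ t + 1) :
    ImposesIndependentConditions t B := by
  intro p hp
  have h_pencil (W) : ((B.erase p).filter (lineThrough p · = W)).card ≤ t := by
    rcases ((B.erase p).filter (lineThrough p · = W)).eq_empty_or_nonempty with h | ⟨a, ha⟩
    · simp [h]
    obtain ⟨⟨hap, haB⟩, rfl⟩ : (a ≠ p ∧ a ∈ B) ∧ lineThrough p a = W := by simpa using ha
    refine Nat.le_of_lt_succ (lt_of_lt_of_le ?_ (hline p hp a haB hap.symm))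
    refine Finset.card_lt_card ⟨fun x hx ↦ ?_, fun h ↦ ?_⟩
    · obtain ⟨⟨-, hxB⟩, hxa⟩ : (x ≠ p ∧ x ∈ B) ∧ lineThrough p x = lineThrough p a := by
        simpa using hx
      exact Finset.mem_filter.2 ⟨hxB, hxa ▸ rep_right_mem_lineThrough p x⟩
    · simpa using h (Finset.mem_filter.2 ⟨hp, rep_left_mem_lineThrough p a⟩)
  obtain ⟨F, hFp, hF⟩ := exists_form_eq_one_of_card_le (Finset.notMem_erase p B)
    (by rw [Finset.card_erase_of_mem hp]; omega) h_pencil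
  exact ⟨F, hFp, fun x hx hxp ↦ hF x (Finset.mem_erase.2 ⟨hxp, hx⟩)⟩

open scoped Classical in
theorem imposesIndependentConditions_union {t : ℕ} {p a : Pm K m} (hpa : p ≠ a)
    {L S : Finset (Pm K m)} (hL : ∀ x ∈ L, x.rep ∈ lineThrough p a)
    (hS : ∀ x ∈ S, x.rep ∉ lineThrough p a) (hLt : L.card ≤ t + 1) (hSt : S.card ≤ t) :
    ImposesIndependentConditions t (L ∪ S) := by
  have h_union := Finset.card_union_le L S
  refine imposesIndependentConditions_of_card_line_le (by omega) fun q _ b _ hqb ↦ ?_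
  rw [Finset.filter_union]
  refine (Finset.card_union_le _ _).trans ?_
  have hL_le := Finset.card_filter_le L (·.rep ∈ lineThrough q b)
  have hS_le := Finset.card_filter_le S (·.rep ∈ lineThrough q b)
  by_cases h_line : lineThrough q b = lineThrough p a
  · have hS₀ : S.filter (·.rep ∈ lineThrough q b) = ∅ :=
      Finset.filter_eq_empty_iff.2 fun x hx ↦ h_line ▸ hS x hx
    rw [hS₀, Finset.card_empty]
    omega
  · have hL₁ : (L.filter (·.rep ∈ lineThrough q b)).card ≤ 1 := by
      refine Finset.card_le_one.2 fun x hx y hy ↦ by_contra fun hxy ↦ h_line ?_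
      obtain ⟨hxL, hx⟩ := Finset.mem_filter.1 hx
      obtain ⟨hyL, hy⟩ := Finset.mem_filter.1 hy
      rw [← lineThrough_eq_of_mem hqb hxy hx hy,
        lineThrough_eq_of_mem hpa hxy (hL x hxL) (hL y hyL)]
    omega

open scoped Classical in
theorem card_add_card_le_of_union_eq {P : PN K m d} {k : ℕ} (hk : 0 < k)
    (hP : P ∈ secantWrt (XSet K m d) k) {t t' : ℕ} (h : t + t' = d) {B B₁ B₂ : Finset (Pm K m)}
    {l : Pm K m → K} (hl : ∀ a ∈ B, l a ≠ 0) (hB : P.rep = ∑ a ∈ B, l a • nu d a.rep)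
    (h_union : B₁ ∪ B₂ = B) (h₁ : ImposesIndependentConditions t B₁)
    (h₂ : ImposesIndependentConditions t' B₂) : B₁.card + B₂.card ≤ B.card + k := by
  choose! f hf_one hf_zero using h₁
  choose! g hg_one hg_zero using h₂
  have h_mem₁ (i : ↥(B₁ ∩ B₂)) : (i : Pm K m) ∈ B₁ := (Finset.mem_inter.1 i.2).1
  have h_mem₂ (i : ↥(B₁ ∩ B₂)) : (i : Pm K m) ∈ B₂ := (Finset.mem_inter.1 i.2).2
  have h_mem (i : ↥(B₁ ∩ B₂)) : (i : Pm K m) ∈ B := h_union ▸ Finset.mem_union_left _ (h_mem₁ i)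
  have h_mul (i j : ↥(B₁ ∩ B₂)) (x : Pm K m) :
      nu d x.rep (formMul h (f i) (g j)) = nu t x.rep (f i) * nu t' x.rep (g j) := by
    simp only [nu_apply, coe_formMul, map_mul]
  have h_off (i j : ↥(B₁ ∩ B₂)) (x : Pm K m) (hx : x ∈ B) (hxi : x ≠ i) :
      nu d x.rep (formMul h (f i) (g j)) = 0 := by
    rw [h_mul]
    rcases Finset.mem_union.1 (h_union.symm ▸ hx) with hx₁ | hx₂
    · rw [hf_zero i (h_mem₁ i) x hx₁ hxi, zero_mul]
    · by_cases hxj : x = j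
      · rw [hf_zero i (h_mem₁ i) x (hxj ▸ h_mem₁ j) hxi, zero_mul]
      · rw [hg_zero j (h_mem₂ j) x hx₂ hxj, mul_zero]
  have h_diag : (Matrix.of fun i j : ↥(B₁ ∩ B₂) ↦ P.rep (formMul h (f i) (g j))) =
      Matrix.diagonal fun i : ↥(B₁ ∩ B₂) ↦ l i := by
    ext i j
    rw [Matrix.of_apply, hB, LinearMap.sum_apply, Finset.sum_eq_single_of_mem (i : Pm K m) (h_mem i)
      fun x hx hxi ↦ by rw [LinearMap.smul_apply, h_off i j x hx hxi, smul_zero],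
      LinearMap.smul_apply, h_mul, hf_one i (h_mem₁ i), one_mul, Matrix.diagonal_apply]
    split_ifs with hij
    · rw [← hij, hg_one i (h_mem₂ i), smul_eq_mul, mul_one]
    · rw [hg_zero j (h_mem₂ j) i (h_mem₂ i) fun hh ↦ hij (Subtype.ext hh), smul_zero]
  have h_inter := card_le_of_det_formMul_ne_zero hk hP h (f := fun i : ↥(B₁ ∩ B₂) ↦ f i)
    (g := fun j ↦ g j) <| by
      rw [h_diag, Matrix.det_diagonal]
      exact Finset.prod_ne_zero_iff.2 fun i _ ↦ hl i (h_mem i)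
  rw [Fintype.card_coe] at h_inter
  rw [← Finset.card_union_add_card_inter, h_union]
  omega

theorem exists_union_eq_card_eq {α : Type*} [DecidableEq α] {X : Finset α} {a b : ℕ}
    (ha : a ≤ X.card) (hb : b ≤ X.card) (hab : X.card ≤ a + b) :
    ∃ X₁ X₂, X₁ ∪ X₂ = X ∧ X₁.card = a ∧ X₂.card = b := by
  obtain ⟨X₁, hX₁, hcard₁⟩ := Finset.exists_subset_card_eq ha
  have h_sdiff := Finset.card_sdiff_of_subset hX₁
  obtain ⟨X₂, h_sub, hX₂, hcard₂⟩ :=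
    Finset.exists_subsuperset_card_eq (Finset.sdiff_subset : X \ X₁ ⊆ X) (n := b) (by omega) hb
  refine ⟨X₁, X₂, (Finset.union_subset hX₁ hX₂).antisymm ?_, hcard₁, hcard₂⟩
  rw [← Finset.union_sdiff_of_subset hX₁]
  exact Finset.union_subset_union_right h_sub

open scoped Classical in
theorem exists_line_lt_card {P : PN K m d} {k : ℕ} (hk : 0 < k)
    (hP : P ∈ secantWrt (XSet K m d) k) {t t' : ℕ} (h : t + t' = d) (htt' : t ≤ t')
    (ht't : t' ≤ t + 1) {B : Finset (Pm K m)} {l : Pm K m → K} (hl : ∀ a ∈ B, l a ≠ 0)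
    (hB : P.rep = ∑ a ∈ B, l a • nu d a.rep) (hkd : 2 * k ≤ d) (hBk : k < B.card)
    (hBd : B.card + 2 ≤ d + k) :
    ∃ p a, p ≠ a ∧ t + 1 < (B.filter (·.rep ∈ lineThrough p a)).card := by
  by_contra! h_line
  obtain ⟨B₁, B₂, h_union, hB₁, hB₂⟩ := exists_union_eq_card_eq (X := B)
    (a := min B.card (2 * t + 1)) (b := min B.card (2 * t' + 1)) (by omega) (by omega) (by omega)
  have h_indep {n : ℕ} (htn : t ≤ n) {C : Finset (Pm K m)} (hCB : C ⊆ B)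
      (hC : C.card ≤ 2 * n + 1) : ImposesIndependentConditions n C := by
    refine imposesIndependentConditions_of_card_line_le hC fun p _ a _ hpa ↦ ?_
    have h_le := h_line p a hpa
    have h_mono := Finset.card_le_card (Finset.filter_subset_filter (·.rep ∈ lineThrough p a) hCB)
    omega
  have h_card := card_add_card_le_of_union_eq hk hP h hl hB h_union
    (h_indep le_rfl (h_union ▸ Finset.subset_union_left) (by omega))
    (h_indep htt' (h_union ▸ Finset.subset_union_right) (by omega))
  omega

open scoped Classical in
theorem card_off_line_le {P : PN K m d} {k : ℕ} (hk : 0 < k)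
    (hP : P ∈ secantWrt (XSet K m d) k) {t t' : ℕ} (h : t + t' = d) (ht't : t' ≤ t + 1)
    {B : Finset (Pm K m)} {l : Pm K m → K} (hl : ∀ a ∈ B, l a ≠ 0)
    (hB : P.rep = ∑ a ∈ B, l a • nu d a.rep) (hkd : 2 * k ≤ d)
    (hBd : B.card + 2 ≤ d + k) {p a : Pm K m} (hpa : p ≠ a)
    (h_line : t + 1 < (B.filter (·.rep ∈ lineThrough p a)).card) :
    (B.filter (·.rep ∉ lineThrough p a)).card ≤ t := by
  by_contra! h_off
  have h_card := B.card_filter_add_card_filter_not (·.rep ∈ lineThrough p a)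
  obtain ⟨L₁, L₂, hL, hL₁, hL₂⟩ :=
    exists_union_eq_card_eq (X := B.filter (·.rep ∈ lineThrough p a)) (a := t + 1) (b := t' + 1)
      (by omega) (by omega) (by omega)
  obtain ⟨S₁, S₂, hS, hS₁, hS₂⟩ :=
    exists_union_eq_card_eq (X := B.filter (·.rep ∉ lineThrough p a)) (a := t) (b := t')
      (by omega) (by omega) (by omega)
  have h_union : (L₁ ∪ S₁) ∪ (L₂ ∪ S₂) = B := by
    rw [Finset.union_union_union_comm, hL, hS, Finset.filter_union_filter_not_eq]
  have hL_mem {x} (hx : x ∈ L₁ ∪ L₂) : x.rep ∈ lineThrough p a := by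
    rw [hL] at hx
    exact (Finset.mem_filter.1 hx).2
  have hS_notMem {x} (hx : x ∈ S₁ ∪ S₂) : x.rep ∉ lineThrough p a := by
    rw [hS] at hx
    exact (Finset.mem_filter.1 hx).2
  have h_le := card_add_card_le_of_union_eq hk hP h hl hB h_union
    (imposesIndependentConditions_union hpa (fun x hx ↦ hL_mem (Finset.mem_union_left _ hx))
      (fun x hx ↦ hS_notMem (Finset.mem_union_left _ hx)) hL₁.le hS₁.le)
    (imposesIndependentConditions_union hpa (fun x hx ↦ hL_mem (Finset.mem_union_right _ hx))
      (fun x hx ↦ hS_notMem (Finset.mem_union_right _ hx)) hL₂.le hS₂.le)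
  have h_disj₁ : Disjoint L₁ S₁ := Finset.disjoint_left.2 fun x hxL hxS ↦
    hS_notMem (Finset.mem_union_left _ hxS) (hL_mem (Finset.mem_union_left _ hxL))
  have h_disj₂ : Disjoint L₂ S₂ := Finset.disjoint_left.2 fun x hxL hxS ↦
    hS_notMem (Finset.mem_union_right _ hxS) (hL_mem (Finset.mem_union_right _ hxL))
  rw [Finset.card_union_of_disjoint h_disj₁, Finset.card_union_of_disjoint h_disj₂] at h_le
  omega

end Lines

section Charts

open Polynomial

theorem coeff_prod_pow_of_natDegree_le_one {R ι : Type*} [CommSemiring R] (s : Finset ι)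
    (p : ι → R[X]) (hp : ∀ i ∈ s, (p i).natDegree ≤ 1) (e : ι → ℕ) :
    (∏ i ∈ s, p i ^ e i).coeff (∑ i ∈ s, e i) = ∏ i ∈ s, (p i).coeff 1 ^ e i := by
  simpa [Finset.prod_sigma] using coeff_prod_of_natDegree_le
    (s.sigma fun i ↦ Finset.range (e i)) (fun x ↦ p x.1) 1 fun x hx ↦ hp _ (Finset.mem_sigma.1 hx).1

/-- An affine coordinate on a line of `ℙ^m`: the line is the projectivization of the span of `w₀`
and `w₁`, with `w₁` as the point at infinity, and the functionals `e₀`, `e₁` extend the dual basis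
of `w₀`, `w₁`, so that the coordinate is `e₁ / e₀`. -/
structure LineChart (K : Type) [Field K] (m : ℕ) where
  w₀ : Fin (m + 1) → K
  w₁ : Fin (m + 1) → K
  e₀ : Module.Dual K (Fin (m + 1) → K)
  e₁ : Module.Dual K (Fin (m + 1) → K)
  e₀_w₀ : e₀ w₀ = 1
  e₀_w₁ : e₀ w₁ = 0
  e₁_w₀ : e₁ w₀ = 0
  e₁_w₁ : e₁ w₁ = 1

variable {K : Type} [Field K] {m d : ℕ}

theorem exists_lineChart {p a : Pm K m} (h : p ≠ a) :
    ∃ c : LineChart K m, c.w₀ = p.rep ∧ c.w₁ = a.rep := by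
  obtain ⟨e₀, he₀p, he₀a⟩ := exists_dual_eq_one_of_notMem (rep_notMem_span_singleton h)
  obtain ⟨e₁, he₁a, he₁p⟩ := exists_dual_eq_one_of_notMem (rep_notMem_span_singleton h.symm)
  exact ⟨⟨p.rep, a.rep, e₀, e₁, he₀p, he₀a _ (Submodule.mem_span_singleton_self _),
    he₁p _ (Submodule.mem_span_singleton_self _), he₁a⟩, rfl, rfl⟩

namespace LineChart

variable (c : LineChart K m)

/-- The linear subspace whose projectivization is the line of the chart. -/
def line : Submodule K (Fin (m + 1) → K) :=
  Submodule.span K {c.w₀, c.w₁}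

theorem eq_smul_add_smul {v : Fin (m + 1) → K} (hv : v ∈ c.line) :
    v = c.e₀ v • c.w₀ + c.e₁ v • c.w₁ := by
  obtain ⟨a, b, rfl⟩ := Submodule.mem_span_pair.1 hv
  simp [c.e₀_w₀, c.e₀_w₁, c.e₁_w₀, c.e₁_w₁]

/-- Restriction of a polynomial on the ambient space to the affine part of the line of the chart. -/
noncomputable def restrict : PR K m →ₐ[K] K[X] :=
  MvPolynomial.aeval fun i ↦ C (c.w₁ i) * X + C (c.w₀ i)

theorem eval_restrict (F : PR K m) (z : K) :
    (c.restrict F).eval z = MvPolynomial.eval (c.w₀ + z • c.w₁) F := by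
  have h : (aeval z).comp c.restrict = MvPolynomial.aeval (c.w₀ + z • c.w₁) := by
    ext i
    simp [restrict, add_comm, mul_comm z]
  simpa [coe_aeval_eq_eval] using DFunLike.congr_fun h F

theorem restrict_linearForm (φ : Module.Dual K (Fin (m + 1) → K)) :
    c.restrict (linearForm φ) = C (φ c.w₁) * X + C (φ c.w₀) := by
  have h (v : Fin (m + 1) → K) : C (φ v) = ∑ i, C (φ (Pi.single i 1)) * C (v i) := by
    rw [← eval_linearForm, linearForm]
    simp
  rw [h c.w₀, h c.w₁, Finset.sum_mul, ← Finset.sum_add_distrib]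
  simp only [linearForm, restrict, map_sum, map_mul, MvPolynomial.algHom_C, algebraMap_eq,
    MvPolynomial.aeval_X, mul_add, mul_assoc]

theorem natDegree_restrict_le {F : PR K m} {k : ℕ} (hF : F.IsHomogeneous k) :
    (c.restrict F).natDegree ≤ k := by
  simpa [restrict] using MvPolynomial.aeval_natDegree_le F hF.totalDegree_le _
    fun i ↦ natDegree_linear_le (a := c.w₁ i) (b := c.w₀ i)

theorem coeff_restrict {F : PR K m} {k : ℕ} (hF : F.IsHomogeneous k) :
    (c.restrict F).coeff k = MvPolynomial.eval c.w₁ F := by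
  rw [restrict, MvPolynomial.aeval_def, MvPolynomial.eval₂_eq', MvPolynomial.eval_eq',
    finsetSum_coeff]
  refine Finset.sum_congr rfl fun e he ↦ ?_
  have h_deg : ∑ i, e i = k := by
    simpa [Finsupp.weight_apply, Finsupp.sum_fintype] using
      hF (MvPolynomial.mem_support_iff.1 he)
  rw [algebraMap_eq, coeff_C_mul, ← h_deg,
    coeff_prod_pow_of_natDegree_le_one _ _ fun i _ ↦ natDegree_linear_le]
  simp

/-- The form of degree `k` restricting to a given polynomial of degree at most `k`: its
homogenization in the coordinates `e₁`, `e₀`. -/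
noncomputable def form (k : ℕ) (f : K[X]) : Hd K m k :=
  ⟨MvPolynomial.aeval ![linearForm c.e₁, linearForm c.e₀] (f.homogenize k),
    (MvPolynomial.mem_homogeneousSubmodule _ _).2 <| by
      simpa using (isHomogeneous_homogenize f).aeval (n := 1) ![linearForm c.e₁, linearForm c.e₀]
        (Fin.forall_fin_two.2 ⟨isHomogeneous_linearForm c.e₁, isHomogeneous_linearForm c.e₀⟩)⟩

theorem restrict_form {k : ℕ} {f : K[X]} (hf : f.natDegree ≤ k) :
    c.restrict (c.form k f : PR K m) = f := by
  have h_comp : c.restrict (c.form k f : PR K m) =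
      MvPolynomial.aeval ![X, 1] (f.homogenize k) := by
    rw [form, ← AlgHom.comp_apply, MvPolynomial.comp_aeval]
    congr 2
    ext i : 1
    fin_cases i <;> simp [restrict_linearForm, c.e₀_w₀, c.e₀_w₁, c.e₁_w₀, c.e₁_w₁]
  rw [h_comp, aeval_homogenize_of_eq_one hf _ rfl]
  simp

/-- The functional on forms of degree `d` obtained from a functional on `K[X]` by restriction to
the line of the chart. -/
noncomputable def pullback (d : ℕ) (ψ : K[X] →ₗ[K] K) : Module.Dual K (Hd K m d) :=
  ψ ∘ₗ c.restrict.toLinearMap ∘ₗ (Hd K m d).subtype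

theorem pullback_apply (ψ : K[X] →ₗ[K] K) (F : Hd K m d) :
    c.pullback d ψ F = ψ (c.restrict (F : PR K m)) :=
  rfl

theorem pullback_congr {ψ φ : K[X] →ₗ[K] K} (h : ∀ f : K[X], f.natDegree ≤ d → ψ f = φ f) :
    c.pullback d ψ = c.pullback d φ :=
  LinearMap.ext fun F ↦
    h _ (c.natDegree_restrict_le ((MvPolynomial.mem_homogeneousSubmodule _ _).1 F.2))

theorem nu_add_smul (z : K) : nu d (c.w₀ + z • c.w₁) = c.pullback d (leval z) := by
  ext F
  rw [nu_apply, pullback_apply, leval_apply, eval_restrict]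

theorem nu_eq_smul_pullback {v : Fin (m + 1) → K} (hv : v ∈ c.line) (h₀ : c.e₀ v ≠ 0) :
    nu d v = c.e₀ v ^ d • c.pullback d (leval (c.e₁ v / c.e₀ v)) := by
  rw [← nu_add_smul, ← nu_smul, smul_add, smul_smul, mul_div_cancel₀ _ h₀,
    ← c.eq_smul_add_smul hv]

/-- The affine coordinate of a point of the line, with junk value `0` at infinity. -/
noncomputable def coord (x : Pm K m) : K :=
  c.e₁ x.rep / c.e₀ x.rep

theorem injOn_coord {L : Finset (Pm K m)} (hL : ∀ x ∈ L, x.rep ∈ c.line)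
    (h₀ : ∀ x ∈ L, c.e₀ x.rep ≠ 0) : Set.InjOn c.coord L := by
  intro x hx y hy hxy
  by_contra hne
  refine rep_notMem_span_singleton hne (Submodule.mem_span_singleton.2
    ⟨c.e₀ x.rep / c.e₀ y.rep, ?_⟩)
  have h₁ : c.e₀ x.rep / c.e₀ y.rep * c.e₁ y.rep = c.e₁ x.rep := by
    have := h₀ x hx
    have := h₀ y hy
    rw [coord, coord] at hxy
    field_simp at hxy ⊢
    rw [hxy]
  calc (c.e₀ x.rep / c.e₀ y.rep) • y.rep
      = (c.e₀ x.rep / c.e₀ y.rep) • (c.e₀ y.rep • c.w₀ + c.e₁ y.rep • c.w₁) :=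
        congrArg _ (c.eq_smul_add_smul (hL y hy))
    _ = c.e₀ x.rep • c.w₀ + c.e₁ x.rep • c.w₁ := by
        rw [smul_add, smul_smul, smul_smul, div_mul_cancel₀ _ (h₀ y hy), h₁]
    _ = x.rep := (c.eq_smul_add_smul (hL x hx)).symm

/-- The chart on the same line whose point at infinity is the point of coordinate `z`. -/
def moveInfinity (z : K) : LineChart K m where
  w₀ := c.w₁
  w₁ := c.w₀ + z • c.w₁
  e₀ := c.e₁ - z • c.e₀
  e₁ := c.e₀
  e₀_w₀ := by simp [c.e₀_w₁, c.e₁_w₁]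
  e₀_w₁ := by simp [c.e₀_w₀, c.e₀_w₁, c.e₁_w₀, c.e₁_w₁]
  e₁_w₀ := c.e₀_w₁
  e₁_w₁ := by simp [c.e₀_w₀, c.e₀_w₁]

theorem line_moveInfinity (z : K) : (c.moveInfinity z).line = c.line := by
  have h₀ : c.w₀ ∈ Submodule.span K {c.w₁, c.w₀ + z • c.w₁} :=
    Submodule.mem_span_pair.2 ⟨-z, 1, by module⟩
  have h₁ : c.w₀ + z • c.w₁ ∈ c.line :=
    Submodule.mem_span_pair.2 ⟨1, z, by module⟩
  exact le_antisymm
    (Submodule.span_le.2 (Set.pair_subset (Submodule.mem_span_of_mem (Set.mem_insert_of_mem _ rfl))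
      h₁))
    (Submodule.span_le.2 (Set.pair_subset h₀ (Submodule.mem_span_of_mem (Set.mem_insert _ _))))

-- The new point at infinity is any point at which neither `G` nor the linear forms cutting out the
-- points of `L` vanish.
theorem exists_eval_w₁_ne_zero [Infinite K] {L : Finset (Pm K m)} (hL : ∀ x ∈ L, x.rep ∈ c.line)
    {G : PR K m} (hG : c.restrict G ≠ 0) :
    ∃ c' : LineChart K m, c'.line = c.line ∧ (∀ x ∈ L, c'.e₀ x.rep ≠ 0) ∧
      MvPolynomial.eval c'.w₁ G ≠ 0 := by
  have h_lin (x) (hx : x ∈ L) : C (c.e₁ x.rep) - X * C (c.e₀ x.rep) ≠ 0 := by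
    intro h
    have h₁ : c.e₁ x.rep = 0 := by simpa using congrArg (coeff · 0) h
    have h₀ : c.e₀ x.rep = 0 := by simpa [coeff_C] using congrArg (coeff · 1) h
    refine x.rep_nonzero ?_
    rw [c.eq_smul_add_smul (hL x hx), h₀, h₁, zero_smul, zero_smul, add_zero]
  obtain ⟨z, hz⟩ := exists_eval_ne_zero (mul_ne_zero hG (Finset.prod_ne_zero_iff.2 h_lin))
  rw [eval_mul, eval_restrict, eval_prod, mul_ne_zero_iff, Finset.prod_ne_zero_iff] at hz
  refine ⟨c.moveInfinity z, c.line_moveInfinity z, fun x hx ↦ ?_, hz.1⟩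
  simpa [moveInfinity, mul_comm z] using hz.2 x hx

theorem sum_nu_eq_pullback {L : Finset (Pm K m)} (hL : ∀ x ∈ L, x.rep ∈ c.line)
    (h₀ : ∀ x ∈ L, c.e₀ x.rep ≠ 0) (l : Pm K m → K) :
    ∑ x ∈ L, l x • nu d x.rep =
      c.pullback d (∑ x ∈ L, (l x * c.e₀ x.rep ^ d) • leval (c.coord x)) := by
  ext F
  simp only [LinearMap.sum_apply, LinearMap.smul_apply, pullback_apply]
  refine Finset.sum_congr rfl fun x hx ↦ ?_
  rw [c.nu_eq_smul_pullback (hL x hx) (h₀ x hx), LinearMap.smul_apply, pullback_apply, smul_smul,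
    coord]

theorem exists_form_forall_pullback_formMul_eq_zero {a b : ℕ} (h : a + b = d) (hba : b < a)
    (φ : K[X] →ₗ[K] K) :
    ∃ G : Hd K m a, c.restrict (G : PR K m) ≠ 0 ∧
      ∀ F : Hd K m b, c.pullback d φ (formMul h G F) = 0 := by
  obtain ⟨q, hq, hq0, hφ⟩ := exists_ne_zero_forall_map_mul_eq_zero φ (Nat.succ_lt_succ hba)
  have hqG : c.restrict (c.form a q : PR K m) = q :=
    c.restrict_form (Nat.lt_succ_iff.1 ((natDegree_lt_iff_degree_lt hq0).2 (mem_degreeLT.1 hq)))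
  refine ⟨c.form a q, hqG.symm ▸ hq0, fun F ↦ ?_⟩
  rw [pullback_apply, coe_formMul, map_mul, hqG]
  have hF : (c.restrict (F : PR K m)).natDegree ≤ b :=
    c.natDegree_restrict_le ((MvPolynomial.mem_homogeneousSubmodule _ _).1 F.2)
  exact hφ _ (mem_degreeLT.2 ((degree_le_of_natDegree_le hF).trans_lt (mod_cast b.lt_succ_self)))

theorem exists_pullback_eq_of_forall_formMul_eq_zero {a b : ℕ} (h : a + b = d)
    {φ : K[X] →ₗ[K] K} {G : Hd K m a} (hG : MvPolynomial.eval c.w₁ (G : PR K m) ≠ 0)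
    (hφ : ∀ F : Hd K m b, c.pullback d φ (formMul h G F) = 0) :
    ∃ (ψ : K[X] →ₗ[K] K) (g : K[X]), g.Monic ∧ g.natDegree ≤ a ∧
      apolarIdeal ψ = Ideal.span {g} ∧ c.pullback d φ = c.pullback d ψ := by
  have hG' := (MvPolynomial.mem_homogeneousSubmodule _ _).1 G.2
  have h_lead : (c.restrict (G : PR K m)).coeff a ≠ 0 := (c.coeff_restrict hG').symm ▸ hG
  have h_deg : (c.restrict (G : PR K m)).natDegree = a :=
    natDegree_eq_of_le_of_coeff_ne_zero (c.natDegree_restrict_le hG') h_lead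
  have h_ne : c.restrict (G : PR K m) ≠ 0 := fun h0 ↦ h_lead (by rw [h0, coeff_zero])
  have h_deg' : (c.restrict (G : PR K m) * C (leadingCoeff (c.restrict (G : PR K m)))⁻¹).natDegree
      = a := by
    rw [natDegree_mul_leadingCoeff_inv _ h_ne, h_deg]
  obtain ⟨ψ, g, hg, hga, hψ, hψφ⟩ := exists_extension_of_forall_mul_eq_zero (d := d) (φ := φ)
    (monic_mul_leadingCoeff_inv h_ne) fun f hf ↦ by
      rw [h_deg', ← h] at hf
      have hF := hφ (c.form b f)
      rw [pullback_apply, coe_formMul, map_mul, c.restrict_form (Nat.add_le_add_iff_left.1 hf)]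
        at hF
      rw [mul_right_comm, mul_comm, ← smul_eq_C_mul, map_smul, hF, smul_zero]
  exact ⟨ψ, g, hg, h_deg' ▸ hga, hψ, (c.pullback_congr hψφ).symm⟩

-- The apolar form of degree `a` does not depend on the chart, so the point at infinity can be moved
-- off its zeros; the form then has full degree `a` in the affine coordinate.
theorem exists_sum_nu_eq_pullback [Infinite K] {a b : ℕ} (h : a + b = d) (hba : b < a)
    {L : Finset (Pm K m)} (hL : ∀ x ∈ L, x.rep ∈ c.line) (l : Pm K m → K) :
    ∃ (c' : LineChart K m) (ψ : K[X] →ₗ[K] K) (g : K[X]), c'.line = c.line ∧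
      (∀ x ∈ L, c'.e₀ x.rep ≠ 0) ∧ g.Monic ∧ g.natDegree ≤ a ∧ apolarIdeal ψ = Ideal.span {g} ∧
      ∑ x ∈ L, l x • nu d x.rep = c'.pullback d ψ := by
  obtain ⟨c₀, h_line₀, h₀, -⟩ := c.exists_eval_w₁_ne_zero hL (G := 1) (by simp)
  have hL₀ : ∀ x ∈ L, x.rep ∈ c₀.line := h_line₀.symm ▸ hL
  obtain ⟨G, hG0, hG⟩ := c₀.exists_form_forall_pullback_formMul_eq_zero h hba _
  rw [← c₀.sum_nu_eq_pullback hL₀ h₀ l] at hG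
  obtain ⟨c', h_line, h₁, hGw⟩ := c₀.exists_eval_w₁_ne_zero hL₀ hG0
  have hL₁ : ∀ x ∈ L, x.rep ∈ c'.line := h_line.symm ▸ hL₀
  rw [c'.sum_nu_eq_pullback hL₁ h₁ l] at hG ⊢
  obtain ⟨ψ, g, hg, hga, hψ, hφψ⟩ := c'.exists_pullback_eq_of_forall_formMul_eq_zero h hGw hG
  exact ⟨c', ψ, g, h_line.trans h_line₀, h₁, hg, hga, hψ, hφψ⟩

theorem add_two_le_card_add_natDegree {L : Finset (Pm K m)} (hL : ∀ x ∈ L, x.rep ∈ c.line)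
    (h₀ : ∀ x ∈ L, c.e₀ x.rep ≠ 0) {l : Pm K m → K} (hl : ∀ x ∈ L, l x ≠ 0)
    {ψ : K[X] →ₗ[K] K} {g : K[X]} (hg0 : g ≠ 0) (hg : g ∈ apolarIdeal ψ)
    (h_sum : ∑ x ∈ L, l x • nu d x.rep = c.pullback d ψ) (hlt : g.natDegree < L.card) :
    d + 2 ≤ L.card + g.natDegree := by
  refine _root_.add_two_le_card_add_natDegree (c.injOn_coord hL h₀)
    (c := fun x ↦ l x * c.e₀ x.rep ^ d) (fun x hx ↦ mul_ne_zero (hl x hx) (pow_ne_zero d (h₀ x hx)))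
    hg0 hg (fun f hf ↦ ?_) hlt
  have h := DFunLike.congr_fun h_sum (c.form d f)
  rw [c.sum_nu_eq_pullback hL h₀, pullback_apply, pullback_apply, c.restrict_form hf] at h
  simpa using h.symm

theorem w₀_add_smul_w₁_ne_zero (z : K) : c.w₀ + z • c.w₁ ≠ 0 := fun h ↦ by
  simpa [c.e₀_w₀, c.e₀_w₁] using congrArg c.e₀ h

/-- The point of the line with a given affine coordinate. -/
noncomputable def point (z : K) : Pm K m :=
  Projectivization.mk K (c.w₀ + z • c.w₁) (c.w₀_add_smul_w₁_ne_zero z)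

open scoped Classical in
theorem pullback_add_sum_mem_dualSpan {ι : Type*} {s : Finset ι} {y w : ι → K}
    {ψ : K[X] →ₗ[K] K} (hψ : ∀ f : K[X], f.natDegree ≤ d → ψ f = ∑ i ∈ s, w i * f.eval (y i))
    (S : Finset (Pm K m)) (l : Pm K m → K) :
    c.pullback d ψ + ∑ q ∈ S, l q • nu d q.rep ∈
      dualSpan d ((s.image fun i ↦ c.point (y i)) ∪ S : Finset (Pm K m)) := by
  have h_pull : c.pullback d ψ = ∑ i ∈ s, w i • nu d (c.w₀ + y i • c.w₁) := by
    rw [c.pullback_congr (φ := ∑ i ∈ s, w i • leval (y i)) fun f hf ↦ by simpa using hψ f hf]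
    ext F
    simp only [nu_add_smul, pullback_apply, LinearMap.sum_apply, LinearMap.smul_apply]
  rw [h_pull]
  refine add_mem (sum_mem fun i hi ↦ Submodule.smul_mem _ _ (nu_mem_dualSpan
      (c.w₀_add_smul_w₁_ne_zero _) ?_)) (sum_mem fun q hq ↦ Submodule.smul_mem _ _
      (Submodule.subset_span ⟨q, ?_, rfl⟩))
  · exact Finset.mem_coe.2 (Finset.mem_union_left _ (Finset.mem_image_of_mem _ hi))
  · exact Finset.mem_coe.2 (Finset.mem_union_right _ hq)

theorem srank_le [CharZero K] [IsAlgClosed K] {ψ : K[X] →ₗ[K] K} {g : K[X]} (hg : g.Monic)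
    (hψ : apolarIdeal ψ = Ideal.span {g}) (hd : 2 * g.natDegree ≤ d + 2) {P : PN K m d}
    {S : Finset (Pm K m)} {l : Pm K m → K}
    (hP : P.rep = c.pullback d ψ + ∑ q ∈ S, l q • nu d q.rep) :
    srank d P ≤ d + 2 - g.natDegree + S.card := by
  classical
  obtain ⟨Z, w, hZ, hψZ⟩ := exists_map_eq_sum_card_eq hg hψ hd
  calc srank d P ≤ (Z.image c.point ∪ S).card :=
        srank_le_card (hP ▸ c.pullback_add_sum_mem_dualSpan hψZ S l)
    _ ≤ Z.card + S.card := (Finset.card_union_le _ _).trans (by gcongr; exact Finset.card_image_le)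
    _ = d + 2 - g.natDegree + S.card := by rw [hZ]

theorem exists_form_eq_single {S : Finset (Pm K m)} (hS : ∀ q ∈ S, q.rep ∉ c.line) {k : ℕ}
    (hk : S.card ≤ k) {q : Pm K m} (hq : q ∈ S) :
    ∃ G : Hd K m k, c.restrict (G : PR K m) = 0 ∧ nu k q.rep G = 1 ∧
      ∀ q' ∈ S, q' ≠ q → nu k q'.rep G = 0 := by
  classical
  obtain ⟨φ, hφq, hφ⟩ := exists_dual_eq_one_of_notMem (hS q hq)
  have h_sep (q' : Pm K m) (h : q' ∈ S.erase q) :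
      ∃ χ : Module.Dual K (Fin (m + 1) → K), χ q.rep = 1 ∧ χ q'.rep = 0 := by
    obtain ⟨χ, hχq, hχ⟩ := exists_dual_eq_one_of_notMem
      (rep_notMem_span_singleton (Finset.ne_of_mem_erase h).symm)
    exact ⟨χ, hχq, hχ _ (Submodule.mem_span_singleton_self _)⟩
  choose! χ hχq hχ using h_sep
  have h_hom : (linearForm φ ^ (k - (S.erase q).card) *
      ∏ q' ∈ S.erase q, linearForm (χ q')).IsHomogeneous k := by
    have h := ((isHomogeneous_linearForm φ).pow (k - (S.erase q).card)).mul
      (MvPolynomial.IsHomogeneous.prod (S.erase q) _ (fun _ ↦ 1)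
        fun q' _ ↦ isHomogeneous_linearForm (χ q'))
    have h_card : (S.erase q).card ≤ k := (Finset.card_erase_le).trans hk
    simpa [Nat.sub_add_cancel h_card] using h
  refine ⟨⟨_, (MvPolynomial.mem_homogeneousSubmodule _ _).2 h_hom⟩, ?_, ?_, fun q' hq' hne ↦ ?_⟩
  · have h_pos : k - (S.erase q).card ≠ 0 :=
      Nat.sub_ne_zero_of_lt ((Finset.card_erase_lt_of_mem hq).trans_le hk)
    have h_line (v) (hv : v ∈ ({c.w₀, c.w₁} : Set (Fin (m + 1) → K))) : φ v = 0 :=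
      hφ v (Submodule.subset_span hv)
    rw [map_mul, map_pow, restrict_linearForm, h_line c.w₀ (by simp), h_line c.w₁ (by simp)]
    simp [h_pos]
  · rw [nu_apply, map_mul, map_pow, eval_linearForm, hφq, one_pow, one_mul, map_prod]
    exact Finset.prod_eq_one fun q' hq' ↦ by rw [eval_linearForm, hχq q' hq']
  · have h_mem := Finset.mem_erase.2 ⟨hne, hq'⟩
    rw [nu_apply, map_mul, map_prod, Finset.prod_eq_zero h_mem
      (by rw [eval_linearForm, hχ q' h_mem]), mul_zero]

theorem exists_form_restrict_eq {S : Finset (Pm K m)} (hS : ∀ q ∈ S, q.rep ∉ c.line) {k : ℕ}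
    (hk : S.card ≤ k) {p : K[X]} (hp : p.natDegree ≤ k) (b : Pm K m → K) :
    ∃ F : Hd K m k, c.restrict (F : PR K m) = p ∧ ∀ q ∈ S, nu k q.rep F = b q := by
  choose! G hG_line hG_self hG_ne using fun q hq ↦ c.exists_form_eq_single hS hk (q := q) hq
  refine ⟨c.form k p + ∑ q ∈ S, (b q - nu k q.rep (c.form k p)) • G q, ?_, fun q hq ↦ ?_⟩
  · rw [Submodule.coe_add, map_add, c.restrict_form hp, Submodule.coe_sum, map_sum,
      Finset.sum_eq_zero fun q hq ↦ by rw [Submodule.coe_smul, map_smul, hG_line q hq, smul_zero],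
      add_zero]
  · rw [map_add, map_sum, Finset.sum_eq_single_of_mem q hq fun q' hq' hne ↦ by
      rw [map_smul, hG_ne q' hq' q hq hne.symm, smul_zero], map_smul, hG_self q hq, smul_eq_mul,
      mul_one, add_sub_cancel]

open scoped Classical in
theorem exists_forall_restrict_eq_and_nu_eq {n : ℕ} {S : Finset (Pm K m)}
    (hS : ∀ q ∈ S, q.rep ∉ c.line) {k : ℕ} (hk : S.card ≤ k) {p : Fin n → K[X]}
    (hp : ∀ i, (p i).natDegree ≤ k) :
    ∃ F : Fin n ⊕ S → Hd K m k, (∀ i, c.restrict (F i : PR K m) = Sum.elim p 0 i) ∧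
      ∀ i (q : S), nu k (q : Pm K m).rep (F i) = if i = Sum.inr q then 1 else 0 := by
  choose F hF using fun i : Fin n ⊕ S ↦ c.exists_form_restrict_eq hS hk
    (p := Sum.elim p 0 i) (by cases i <;> simp [hp])
    (Sum.elim 0 (fun q : S ↦ Pi.single (q : Pm K m) 1) i)
  refine ⟨F, fun i ↦ (hF i).1, fun i q ↦ ((hF i).2 q q.2).trans ?_⟩
  rcases i with i | q'
  · simp
  · simp [Pi.single_apply, eq_comm]

open scoped Classical in
theorem of_formMul_eq_diagonal {n t t' : ℕ} (h : t + t' = d) {ψ : K[X] →ₗ[K] K}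
    {S : Finset (Pm K m)} {l : Pm K m → K} {y : Module.Dual K (Hd K m d)}
    (hy : y = c.pullback d ψ + ∑ q ∈ S, l q • nu d q.rep) {p u : Fin n → K[X]}
    (hpu : ∀ i j, ψ (p i * u j) = if i = j then 1 else 0) {F : Fin n ⊕ S → Hd K m t}
    (hFp : ∀ i, c.restrict (F i : PR K m) = Sum.elim p 0 i)
    (hFS : ∀ i (q : S), nu t (q : Pm K m).rep (F i) = if i = Sum.inr q then 1 else 0)
    {G : Fin n ⊕ S → Hd K m t'} (hGu : ∀ i, c.restrict (G i : PR K m) = Sum.elim u 0 i)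
    (hGS : ∀ i (q : S), nu t' (q : Pm K m).rep (G i) = if i = Sum.inr q then 1 else 0) :
    (Matrix.of fun i j ↦ y (formMul h (F i) (G j))) =
      Matrix.diagonal (Sum.elim 1 fun q : S ↦ l q) := by
  ext i j
  have h_entry : y (formMul h (F i) (G j)) = ψ (Sum.elim p 0 i * Sum.elim u 0 j) +
      ∑ q : S, l q * ((if i = Sum.inr q then 1 else 0) * if j = Sum.inr q then 1 else 0) := by
    rw [hy, LinearMap.add_apply, pullback_apply, coe_formMul, map_mul, hFp, hGu,
      LinearMap.sum_apply, ← Finset.sum_coe_sort]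
    simp only [LinearMap.smul_apply, nu_apply (d := d), coe_formMul, map_mul, smul_eq_mul,
      ← nu_apply, hFS, hGS]
  rw [Matrix.of_apply, h_entry, Matrix.diagonal_apply]
  rcases i with i | q <;> rcases j with j | q'
  · simp [hpu]
  · simp
  · simp
  · rcases eq_or_ne q q' with rfl | hne
    · simp
    · simp [hne]

-- The monomials and their dual basis for the perfect pairing `ψ (p * u)` on `K[X] ⧸ (g)`, together
-- with delta functions at the points of `S`, give a nonsingular minor of a catalecticant of `P`.
theorem natDegree_add_card_le {P : PN K m d} {k : ℕ} (hk : 0 < k)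
    (hP : P ∈ secantWrt (XSet K m d) k) {t t' : ℕ} (h : t + t' = d) (htt' : t ≤ t')
    {ψ : K[X] →ₗ[K] K} {g : K[X]} (hg : g.Monic) (hψ : apolarIdeal ψ = Ideal.span {g})
    (hgt : g.natDegree ≤ t + 1) {S : Finset (Pm K m)} (hS : ∀ q ∈ S, q.rep ∉ c.line)
    (hSt : S.card ≤ t) {l : Pm K m → K} (hl : ∀ q ∈ S, l q ≠ 0)
    (hP_eq : P.rep = c.pullback d ψ + ∑ q ∈ S, l q • nu d q.rep) :
    g.natDegree + S.card ≤ k := by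
  classical
  have h_deg {p : K[X]} (hp : p.degree < g.degree) : p.natDegree ≤ t := by
    rcases eq_or_ne p 0 with rfl | hp0
    · exact natDegree_zero.trans_le t.zero_le
    · have := natDegree_lt_natDegree hp0 hp
      omega
  have hX_deg (i : Fin g.natDegree) : (X ^ (i : ℕ) : K[X]).degree < g.degree := by
    rw [degree_X_pow, degree_eq_natDegree hg.ne_zero]
    exact_mod_cast i.2
  choose u hu_deg hu using fun j : Fin g.natDegree ↦
    exists_degree_lt_forall_map_mul_eq hg hψ (lcoeff K j)
  have h_dual (i j : Fin g.natDegree) : ψ (X ^ (i : ℕ) * u j) = if i = j then 1 else 0 := by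
    rw [mul_comm, hu j _ (hX_deg i), lcoeff_apply, coeff_X_pow]
    simp [Fin.ext_iff, eq_comm]
  obtain ⟨F, hF_line, hF⟩ := c.exists_forall_restrict_eq_and_nu_eq hS hSt
    fun i ↦ h_deg (hX_deg i)
  obtain ⟨G, hG_line, hG⟩ := c.exists_forall_restrict_eq_and_nu_eq hS (hSt.trans htt')
    fun j ↦ (h_deg (hu_deg j)).trans htt'
  have h_card := card_le_of_det_formMul_ne_zero hk hP h (f := F) (g := G) <| by
    rw [c.of_formMul_eq_diagonal h hP_eq h_dual hF_line hF hG_line hG, Matrix.det_diagonal]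
    exact Finset.prod_ne_zero_iff.2 <| by simpa using hl
  simpa using h_card

-- Deforming the roots of `g` into distinct points deforms `P` inside the span of `natDegree g`
-- points of the line and of `S`.
theorem mem_secantWrt [IsAlgClosed K] {P : PN K m d} {ψ : K[X] →ₗ[K] K} {g : K[X]} (hg : g.Monic)
    (hψ : g ∈ apolarIdeal ψ) {S : Finset (Pm K m)} {l : Pm K m → K}
    (hP : P.rep = c.pullback d ψ + ∑ q ∈ S, l q • nu d q.rep) {k : ℕ} (hk : 0 < k)
    (hgk : g.natDegree + S.card ≤ k) : P ∈ secantWrt (XSet K m d) k := by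
  classical
  rw [mem_secantWrt_iff hk]
  intro F hF hF_zero a
  obtain ⟨n, α, hα⟩ := exists_nodal_univ_eq hg
  let γ (Z : Fin n → K) : Module.Dual K (Hd K m d) :=
    a • (c.pullback d (ψ ∘ₗ modByMonicHom (Lagrange.nodal Finset.univ Z)) +
      ∑ q ∈ S, l q • nu d q.rep)
  have hγ (φ : Module.Dual K (Module.Dual K (Hd K m d))) :
      ∃ p : MvPolynomial (Fin n) K, ∀ Z, MvPolynomial.eval Z p = φ (γ Z) := by
    obtain ⟨H, rfl⟩ := (Module.evalEquiv K (Hd K m d)).surjective φ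
    obtain ⟨p, hp⟩ := exists_mvPolynomial_eval_eq_map_modByMonic_nodal (ι := Fin n) ψ
      (c.restrict (H : PR K m))
    exact ⟨MvPolynomial.C a * (p + MvPolynomial.C ((∑ q ∈ S, l q • nu d q.rep) H)),
      fun Z ↦ by simp [γ, hp, pullback_apply, modByMonicHom, mul_add]⟩
  obtain ⟨p, hp⟩ := exists_mvPolynomial_eval_eq_of_mem_polyFunctions hγ hF
  have hp0 : p = 0 := mvPolynomial_eq_zero_of_forall_injective fun Z hZ ↦ by
    rw [hp]
    refine hF_zero _ ?_ _ (Submodule.smul_mem _ _ (c.pullback_add_sum_mem_dualSpan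
      (fun f _ ↦ map_modByMonic_nodal hZ.injOn ψ f) S l))
    have hn : g.natDegree = n := by simp [← hα]
    calc _ ≤ (Finset.univ.image fun i ↦ c.point (Z i)).card + S.card := Finset.card_union_le _ _
      _ ≤ n + S.card := by gcongr; exact Finset.card_image_le.trans_eq (Finset.card_fin n)
      _ ≤ k := hn ▸ hgk
  have hγα : γ α = a • P.rep := by
    have h_mod : ψ ∘ₗ modByMonicHom (Lagrange.nodal Finset.univ α) = ψ :=
      LinearMap.ext fun f ↦ hα ▸ map_modByMonic_eq_of_mem_apolarIdeal hψ f
    rw [hP, ← h_mod]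
  rw [← hγα, ← hp, hp0, map_zero]

end LineChart

end Charts

section Rank

variable {K : Type} [Field K] [IsAlgClosed K] [CharZero K] {m d : ℕ}

open scoped Classical in
theorem exists_srank_add_brank_eq {P : PN K m d} (hd : 2 * brank d P ≤ d)
    (h_lower : d + 3 ≤ srank d P + brank d P) (h_upper : srank d P + 2 ≤ d + brank d P) :
    ∃ n, srank d P + brank d P = d + 2 + 2 * n := by
  have hk : 0 < brank d P := by omega
  have hP := mem_secantWrt_brank hk
  obtain ⟨B, l, hB_card, hl, hB⟩ := exists_card_eq_srank (P := P) (by omega)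
  obtain ⟨t, t', h, htt', ht't⟩ : ∃ t t', t + t' = d ∧ t ≤ t' ∧ t' ≤ t + 1 :=
    ⟨d / 2, d - d / 2, by omega, by omega, by omega⟩
  obtain ⟨p, a, hpa, h_line⟩ :=
    exists_line_lt_card hk hP h htt' ht't hl hB hd (by omega) (by omega)
  have hSt := card_off_line_le hk hP h ht't hl hB hd (by omega) hpa h_line
  set L := B.filter (·.rep ∈ lineThrough p a)
  set S := B.filter (·.rep ∉ lineThrough p a)
  have h_card : L.card + S.card = B.card := B.card_filter_add_card_filter_not _
  obtain ⟨c₀, h₀, h₁⟩ := exists_lineChart hpa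
  have h_line₀ : c₀.line = lineThrough p a := by rw [LineChart.line, lineThrough, h₀, h₁]
  have hL₀ (x) (hx : x ∈ L) : x.rep ∈ c₀.line := h_line₀ ▸ (Finset.mem_filter.1 hx).2
  obtain ⟨c, ψ, g, hc, hcL, hg, hgt, hψ, hLψ⟩ := c₀.exists_sum_nu_eq_pullback
    (a := t + 1) (b := t' - 1) (d := d) (by omega) (by omega) hL₀ l
  have hg_mem : g ∈ apolarIdeal ψ := hψ ▸ Ideal.mem_span_singleton_self g
  have hS (q) (hq : q ∈ S) : q.rep ∉ c.line := by
    rw [hc, h_line₀]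
    exact (Finset.mem_filter.1 hq).2
  have hP_eq : P.rep = c.pullback d ψ + ∑ q ∈ S, l q • nu d q.rep := by
    rw [hB, ← hLψ, Finset.sum_filter_add_sum_filter_not]
  have h_count := c.add_two_le_card_add_natDegree (fun x hx ↦ hc ▸ hL₀ x hx) hcL
    (fun x hx ↦ hl x (Finset.mem_filter.1 hx).1) hg.ne_zero hg_mem hLψ (hgt.trans_lt h_line)
  have h_rank := c.srank_le hg hψ (by omega) hP_eq
  have h_border := c.natDegree_add_card_le hk hP h htt' hg hψ hgt hS hSt
    (fun q hq ↦ hl q (Finset.mem_filter.1 hq).1) hP_eq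
  have h_border' := brank_le (lt_max_of_lt_left one_pos)
    (c.mem_secantWrt hg hg_mem hP_eq (lt_max_of_lt_left one_pos) (le_max_right 1 _))
  exact ⟨S.card, by omega⟩

end Rank

theorem stmt15_general (K : Type) [Field K] [IsAlgClosed K] [CharZero K] (m s d : ℕ)
    (hd : 2 * s ≤ d) :
    ∀ r : ℕ, d + 3 ≤ r + s → r + 2 ≤ d + s → (r + s) % 2 = (d + 1) % 2 →
      sigmaSet K m d s r = ∅ := by
  rintro r h_lower h_upper h_parity
  refine Set.eq_empty_of_forall_notMem ?_
  rintro P ⟨rfl, rfl⟩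
  obtain ⟨n, hn⟩ := exists_srank_add_brank_eq hd h_lower h_upper
  omega

/-- Step (b) of the proof of the main theorem: emptiness of `σ_{s,r}(X_{m,d})` for
`d-s+3 ≤ r ≤ d+s-2` with `r + s ≡ d + 1 (mod 2)`. -/
theorem stmt15 (K : Type) [Field K] [IsAlgClosed K] [CharZero K]
    (m s d : ℕ) (hm : 2 ≤ m) (hs : 4 ≤ s) (hd : 2 * s + 2 ≤ d) :
    ∀ r : ℕ, d + 3 ≤ r + s → r + 2 ≤ d + s → (r + s) % 2 = (d + 1) % 2 →
      sigmaSet K m d s r = ∅ :=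
  stmt15_general K m s d (by omega)
end

section
/- Fix integers m ≥ 2, s ≥ 4 and d ≥ 2s+2. For every integer r with d+s−1 ≤ r ≤ 2d+1−s, one has σ_{s,r}(X_{m,d}) = ∅. -/
open scoped LinearAlgebra.Projectivization

/-!
Write a point of symmetric rank `r` as a combination of `ν_d(b)`, `b ∈ B`, with `|B| = r` and
nonzero coefficients. Border rank at most `s` bounds the ranks of all its catalecticants by `s`.
The catalecticant for `d = u + e` factors through `K^B`, so Sylvester's rank inequality bounds the
Hilbert function of `B` by `h_B(u) + h_B(e) ≤ r + s`. For `d + s - 1 ≤ r ≤ 2d + 1 - s` such small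
values force at least `d + 1` points of `B` onto a line. The corresponding part of the combination
is a binary form of degree `d`, and those have rank at most `d`, contradicting the minimality
of `B`.
-/

namespace Veronese

open MvPolynomial
open scoped Finset

noncomputable section

section LinearAlgebra

variable {K V A B : Type*} [Field K] [AddCommGroup V] [Module K V] [AddCommGroup A] [Module K A]
  [AddCommGroup B] [Module K B]

lemma exists_dual_eq_ite {ι : Type*} [DecidableEq ι] {v : ι → V} (hv : LinearIndependent K v) :
    ∃ β : ι → Module.Dual K V, ∀ i j, β i (v j) = if i = j then 1 else 0 := by
  obtain ⟨g, hg⟩ := LinearMap.exists_leftInverse_of_injective (Finsupp.linearCombination K v)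
    (LinearMap.ker_eq_bot.mpr hv)
  refine ⟨fun i => Finsupp.lapply i ∘ₗ g, fun i j => ?_⟩
  have hgv : g (v j) = Finsupp.single j 1 := by
    simpa using LinearMap.congr_fun hg (Finsupp.single j 1)
  simp [hgv, Finsupp.single_apply, eq_comm]

lemma det_eq_zero_of_rank_lt {ι : Type*} [Fintype ι] [DecidableEq ι] (f : A →ₗ[K] B)
    (hf : f.rank < Fintype.card ι) (a : ι → A) (β : ι → Module.Dual K B) :
    (Matrix.of fun i j => β j (f (a i))).det = 0 := by
  have hdep : ¬LinearIndependent K (f.rangeRestrict ∘ a) := fun h => by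
    simpa using h.cardinal_lift_le_rank.trans_lt (Cardinal.lift_lt.mpr hf)
  obtain ⟨c, hc, i, hi⟩ := Fintype.not_linearIndependent_iff.mp hdep
  have hsum : ∑ i, c i • f (a i) = 0 := by
    simpa using congrArg f.range.subtype hc
  rw [← Matrix.exists_vecMul_eq_zero_iff]
  refine ⟨c, fun h0 => hi (congrFun h0 i), ?_⟩
  funext j
  simpa [Matrix.vecMul, dotProduct] using congrArg (β j) hsum

lemma finrank_range_pi [FiniteDimensional K V] {ι : Type*} [Finite ι] (φ : ι → Module.Dual K V) :
    Module.finrank K (LinearMap.pi φ).range =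
      Module.finrank K (Submodule.span K (Set.range φ)) := by
  have hker : (LinearMap.pi φ).ker = (Submodule.span K (Set.range φ)).dualCoannihilator := by
    ext x
    rw [← SetLike.mem_coe (p := Submodule.dualCoannihilator _),
      Submodule.coe_dualCoannihilator_span]
    simp [funext_iff]
  have hspan := Subspace.finrank_add_finrank_dualCoannihilator_eq (Submodule.span K (Set.range φ))
  have hrank := (LinearMap.pi φ).finrank_range_add_finrank_ker
  rw [hker] at hrank
  omega

lemma finrank_range_add_finrank_range_le {C : Type*} [AddCommGroup C] [Module K C]
    [FiniteDimensional K B] (f : A →ₗ[K] B) (g : B →ₗ[K] C) :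
    Module.finrank K f.range + Module.finrank K g.range ≤
      Module.finrank K B + Module.finrank K (g ∘ₗ f).range := by
  have hg := g.finrank_range_add_finrank_ker
  have hgf := (g.domRestrict f.range).finrank_range_add_finrank_ker
  have hrange : (g.domRestrict f.range).range = (g ∘ₗ f).range := by
    rw [LinearMap.range_domRestrict, LinearMap.range_comp]
  have hker : Module.finrank K (g.domRestrict f.range).ker ≤ Module.finrank K g.ker := by
    rw [← Submodule.finrank_map_subtype_eq, LinearMap.ker_domRestrict]
    exact Submodule.finrank_mono (Submodule.map_comap_le _ _)
  rw [hrange] at hgf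
  omega

end LinearAlgebra

section PolyFunctions

variable {K V : Type} {A B : Type*} [Field K] [AddCommGroup V] [Module K V] [AddCommGroup A]
  [Module K A] [AddCommGroup B] [Module K B]

lemma det_mem_polyFunctions {ι : Type*} [Fintype ι] [DecidableEq ι] (φ : ι → ι → Module.Dual K V) :
    (fun x => (Matrix.of fun i j => φ i j x).det) ∈ polyFunctions K V := by
  have hdet : (fun x => (Matrix.of fun i j => φ i j x).det) =
      ∑ σ : Equiv.Perm ι, ((σ.sign : ℤ) : K) • ∏ i, ⇑(φ (σ i) i) := by
    funext x
    simp [Matrix.det_apply', Finset.sum_apply, Finset.prod_apply]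
  rw [hdet]
  refine Subalgebra.sum_mem _ fun σ _ => Subalgebra.smul_mem _
    (Subalgebra.prod_mem _ fun i _ => ?_) _
  exact Algebra.subset_adjoin ⟨φ (σ i) i, rfl⟩

lemma rank_le_of_mem_zClosure (L : V →ₗ[K] A →ₗ[K] B) {T : Set (ℙ K V)} {s : ℕ}
    (hT : ∀ Q ∈ T, (L Q.rep).rank ≤ s) {P : ℙ K V} (hP : P ∈ zClosure T) :
    (L P.rep).rank ≤ s := by
  classical
  by_contra! hlt
  rw [← Cardinal.natCast_add_one_le_iff, ← Nat.cast_add_one] at hlt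
  obtain ⟨a, ha, hli⟩ := LinearMap.le_rank_iff_exists_linearIndependent_finset.mp hlt
  obtain ⟨β, hβ⟩ := exists_dual_eq_ite hli
  -- The minor of `L x` in the rows `a` and the columns `β`; it equals `1` at `P.rep`.
  have hminor := hP _ (det_mem_polyFunctions fun i j : a => β j ∘ₗ L.flip (i : A))
    (fun Q hQ c => ?_) 1
  · have hone : (Matrix.of fun i j : a => β j (L P.rep i)) = 1 := by
      ext i j
      simp [hβ, Matrix.one_apply, eq_comm]
    simp only [one_smul, LinearMap.comp_apply, LinearMap.flip_apply, hone, Matrix.det_one,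
      one_ne_zero] at hminor
  · refine det_eq_zero_of_rank_lt (L (c • Q.rep)) ?_ (fun i : a => (i : A)) β
    rw [Fintype.card_coe, ha, map_smul]
    have hle : (c • L Q.rep).range ≤ (L Q.rep).range := by
      rintro _ ⟨x, rfl⟩
      exact ⟨c • x, map_smul _ _ _⟩
    exact ((Submodule.rank_mono hle).trans (hT Q hQ)).trans_lt (mod_cast s.lt_succ_self)

end PolyFunctions

section Catalecticant

variable {K : Type} [Field K] {m : ℕ}

instance (d : ℕ) : FiniteDimensional K (Hd K m d) :=
  Module.Finite.iff_fg.mpr (homogeneousSubmodule_fg _ _ d)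

lemma nu_apply (d : ℕ) (v : Fin (m + 1) → K) (f : Hd K m d) :
    nu d v f = eval v (f : PR K m) := by
  simp [nu, aeval_eq_eval]

lemma nu_smul (d : ℕ) (c : K) (v : Fin (m + 1) → K) : nu d (c • v) = c ^ d • nu d v := by
  ext f
  have hf : (f : PR K m).IsHomogeneous d := f.2
  simp only [LinearMap.smul_apply, nu_apply, smul_eq_mul, eval_eq, Finset.mul_sum]
  refine Finset.sum_congr rfl fun k hk => ?_
  simp only [Pi.smul_apply, smul_eq_mul, mul_pow, Finset.prod_mul_distrib,
    Finset.prod_pow_eq_pow_sum, ← hf.degree_eq_sum_deg_support hk]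
  ring

/-- Multiplication of forms, as a bilinear map. The degree of the product is a variable `d`
constrained by `u + e = d`, so that no casts between the spaces of forms are needed. -/
def mulForms {u e d : ℕ} (h : u + e = d) : Hd K m u →ₗ[K] Hd K m e →ₗ[K] Hd K m d :=
  LinearMap.mk₂ K (fun f g => ⟨f * g, h ▸ f.2.mul g.2⟩)
    (fun f f' g => Subtype.ext (add_mul (f : PR K m) f' g))
    (fun c f g => Subtype.ext (smul_mul_assoc c (f : PR K m) g))
    (fun f g g' => Subtype.ext (mul_add (f : PR K m) g g'))
    (fun c f g => Subtype.ext (mul_smul_comm c (f : PR K m) (g : PR K m)))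

/-- The catalecticant `ψ ↦ (f ↦ (g ↦ ψ (f * g)))` of a functional on forms of degree `u + e`,
that is, the contraction of a symmetric tensor by forms of degree `u`. -/
def catalecticant {u e d : ℕ} (h : u + e = d) :
    Module.Dual K (Hd K m d) →ₗ[K] Hd K m u →ₗ[K] Module.Dual K (Hd K m e) :=
  (LinearMap.lcomp K _ (mulForms h)) ∘ₗ (LinearMap.llcomp K (Hd K m e) (Hd K m d) K)

lemma catalecticant_nu {u e d : ℕ} (h : u + e = d) (v : Fin (m + 1) → K) (f : Hd K m u) :
    catalecticant h (nu d v) f = nu u v f • nu e v := by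
  ext g
  simp [catalecticant, mulForms, nu_apply]

lemma exists_linearForm_of_notMem {W : Submodule K (Fin (m + 1) → K)} {v : Fin (m + 1) → K}
    (hv : v ∉ W) : ∃ l : Hd K m 1, (∀ w ∈ W, nu 1 w l = 0) ∧ nu 1 v l ≠ 0 := by
  obtain ⟨f, hf, hW⟩ := Submodule.exists_le_ker_of_notMem hv
  let l : Hd K m 1 := ⟨∑ i, C (f (Pi.single i 1)) * X i,
    IsHomogeneous.sum _ _ _ fun i _ => isHomogeneous_C_mul_X _ _⟩
  have hl : ∀ w, nu 1 w l = f w := fun w => by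
    conv_rhs => rw [pi_eq_sum_univ' w]
    simp [nu_apply, l, mul_comm]
  exact ⟨l, fun w hw => (hl w).trans (hW hw), by rwa [hl]⟩

lemma nu_ne_zero (d : ℕ) {v : Fin (m + 1) → K} (hv : v ≠ 0) : nu d v ≠ 0 := by
  obtain ⟨l, -, hl⟩ := exists_linearForm_of_notMem (W := ⊥) (by simpa using hv)
  intro h
  have hpow : (l : PR K m) ^ d ∈ Hd K m d := by
    simpa using (show (l : PR K m).IsHomogeneous 1 from l.2).pow d
  have hzero := LinearMap.congr_fun h ⟨_, hpow⟩
  rw [nu_apply] at hzero hl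
  exact hl (eq_zero_of_pow_eq_zero (n := d) (by simpa using hzero))

lemma rank_catalecticant_le {u e d : ℕ} (h : u + e = d) {B : Finset (Pm K m)}
    {ψ : Module.Dual K (Hd K m d)} (hψ : ψ ∈ dualSpan d (B : Set (Pm K m))) :
    (catalecticant h ψ).rank ≤ #B := by
  have hrange : (catalecticant h ψ).range ≤ dualSpan e (B : Set (Pm K m)) := by
    rintro _ ⟨f, rfl⟩
    refine (Submodule.span_le.mpr ?_ : dualSpan d (B : Set (Pm K m)) ≤
      (dualSpan e (B : Set (Pm K m))).comap ((catalecticant h).flip f)) hψ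
    rintro _ ⟨b, hb, rfl⟩
    simp only [Submodule.comap_coe, Set.mem_preimage, LinearMap.flip_apply, catalecticant_nu]
    exact Submodule.smul_mem _ _ (Submodule.subset_span ⟨b, hb, rfl⟩)
  refine (Submodule.rank_mono hrange).trans ((rank_span_le _).trans ?_)
  exact Cardinal.mk_image_le.trans (by simp)

end Catalecticant

section Independence

variable {K : Type} [Field K] {m e : ℕ} {L : Set (Pm K m)}

lemma isLinearSub_of_isLine (hL : IsLine L) : IsLinearSub L :=
  let ⟨W, _, hW⟩ := hL
  ⟨W, hW⟩

lemma isLinearSub_singleton (a : Pm K m) : IsLinearSub {a} := by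
  refine ⟨a.submodule, Set.ext fun b => ⟨fun h => h ▸ le_refl b.submodule, fun h => ?_⟩⟩
  refine Projectivization.submodule_injective (Submodule.eq_of_le_of_finrank_eq h ?_)
  rw [b.finrank_submodule, a.finrank_submodule]

lemma rep_mem_iff_submodule_le {W : Submodule K (Fin (m + 1) → K)} {a : Pm K m} :
    a.rep ∈ W ↔ a.submodule ≤ W := by
  rw [a.submodule_eq, Submodule.span_singleton_le_iff_mem]

lemma exists_isLine_of_ne {a b : Pm K m} (hab : a ≠ b) : ∃ L, IsLine L ∧ a ∈ L ∧ b ∈ L := by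
  refine ⟨_, ⟨Submodule.span K (Set.range ![a.rep, b.rep]), ?_, rfl⟩, ?_, ?_⟩
  · exact finrank_span_eq_card (Projectivization.linearIndependent_pair_iff_ne.mpr hab)
  · exact rep_mem_iff_submodule_le.mp (Submodule.subset_span ⟨0, rfl⟩)
  · exact rep_mem_iff_submodule_le.mp (Submodule.subset_span ⟨1, rfl⟩)

/-- The points of `S` impose independent conditions on forms of degree `e`, i.e.
`h¹(𝓘_S(e)) = 0`. -/
def IsIndependent (e : ℕ) (S : Set (Pm K m)) : Prop :=
  LinearIndepOn K (fun a : Pm K m => nu e a.rep) S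

lemma isIndependent_of_inter_of_diff {S : Set (Pm K m)} (hL : IsLinearSub L)
    (hin : IsIndependent (e + 1) (S ∩ L)) (hout : IsIndependent e (S \ L)) :
    IsIndependent (e + 1) S := by
  classical
  obtain ⟨W, rfl⟩ := hL
  refine linearIndepOn_iff'.mpr fun t c ht hsum => ?_
  have hzero : ∀ b ∈ t, b ∉ {a : Pm K m | a.submodule ≤ W} → c b = 0 := by
    intro b hb hbW
    obtain ⟨l, hlW, hlb⟩ := exists_linearForm_of_notMem (mt rep_mem_iff_submodule_le.mp hbW)
    -- Contracting the relation with `l` kills the points on the linear subspace.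
    have hcontr := congrArg (fun ψ => catalecticant (add_comm 1 e) ψ l) hsum
    simp only [map_sum, map_smul, LinearMap.sum_apply, LinearMap.smul_apply, catalecticant_nu,
      map_zero, LinearMap.zero_apply, smul_smul] at hcontr
    rw [← Finset.sum_filter_of_ne (p := fun a => ¬a.submodule ≤ W)
      fun a _ ha haW => ha (by rw [hlW _ (rep_mem_iff_submodule_le.mpr haW)]; simp)] at hcontr
    have hcb := linearIndepOn_iff'.mp hout _ _ (fun a ha => ?_) hcontr b
      (Finset.mem_filter.mpr ⟨hb, hbW⟩)
    · exact (mul_eq_zero.mp hcb).resolve_right hlb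
    · obtain ⟨hat, haW⟩ := Finset.mem_filter.mp ha
      exact ⟨ht hat, haW⟩
  intro b hb
  by_cases hbW : b.submodule ≤ W
  · rw [← Finset.sum_filter_of_ne (p := fun a => a.submodule ≤ W)
      fun a ha hne => by_contra fun haW => hne (by rw [hzero a ha haW, zero_smul])] at hsum
    refine linearIndepOn_iff'.mp hin _ _ (fun a ha => ?_) hsum b (Finset.mem_filter.mpr ⟨hb, hbW⟩)
    obtain ⟨hat, haW⟩ := Finset.mem_filter.mp ha
    exact ⟨ht hat, haW⟩
  · exact hzero b hb hbW

lemma isIndependent_singleton (e : ℕ) (a : Pm K m) : IsIndependent e {a} :=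
  LinearIndepOn.singleton (nu_ne_zero e a.rep_nonzero)

lemma isIndependent_of_card_le {S : Finset (Pm K m)} (hS : #S ≤ e + 1) :
    IsIndependent e (S : Set (Pm K m)) := by
  classical
  induction e generalizing S with
  | zero =>
    obtain rfl | ⟨a, ha⟩ := S.eq_empty_or_nonempty
    · simp [IsIndependent]
    · exact (isIndependent_singleton 0 a).mono fun b hb => Finset.card_le_one.mp hS b hb a ha
  | succ e ih =>
    obtain rfl | ⟨a, ha⟩ := S.eq_empty_or_nonempty
    · simp [IsIndependent]
    refine isIndependent_of_inter_of_diff (isLinearSub_singleton a)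
      ((isIndependent_singleton (e + 1) a).mono Set.inter_subset_right) ?_
    rw [← Finset.coe_erase]
    exact ih (by rw [Finset.card_erase_of_mem ha]; omega)

open scoped Classical in
lemma exists_isLine_of_not_isIndependent {S : Finset (Pm K m)} (hS : #S ≤ 2 * e + 1)
    (hdep : ¬IsIndependent e (S : Set (Pm K m))) :
    ∃ L, IsLine L ∧ e + 2 ≤ #{p ∈ S | p ∈ L} := by
  induction e generalizing S with
  | zero => exact absurd (isIndependent_of_card_le hS) hdep
  | succ e ih =>
    have hcard (L : Set (Pm K m)) : #{p ∈ S | p ∈ L} + #{p ∈ S | p ∉ L} = #S :=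
      Finset.card_filter_add_card_filter_not _
    have hcut (L : Set (Pm K m)) (hL : IsLine L) : e + 3 ≤ #{p ∈ S | p ∈ L} ∨
        ¬IsIndependent e (({p ∈ S | p ∉ L} : Finset (Pm K m)) : Set (Pm K m)) := by
      refine or_iff_not_imp_left.mpr fun hlt hout => hdep
        (isIndependent_of_inter_of_diff (isLinearSub_of_isLine hL) ?_ ?_)
      · exact (isIndependent_of_card_le (S := {p ∈ S | p ∈ L}) (by omega)).mono
          fun _ hp => Finset.mem_coe.mpr (Finset.mem_filter.mpr hp)
      · exact hout.mono fun _ hp => Finset.mem_coe.mpr (Finset.mem_filter.mpr hp)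
    have htwo : 1 < #S := by
      by_contra hlt
      exact hdep (isIndependent_of_card_le (by omega))
    obtain ⟨a, ha, b, hb, hab⟩ := Finset.one_lt_card.mp htwo
    obtain ⟨L, hL, haL, hbL⟩ := exists_isLine_of_ne hab
    have hLtwo : 1 < #{p ∈ S | p ∈ L} :=
      Finset.one_lt_card.mpr ⟨a, by simp [ha, haL], b, by simp [hb, hbL], hab⟩
    have hcardL := hcard L
    obtain hmany | hout := hcut L hL
    · exact ⟨L, hL, hmany⟩
    obtain ⟨L', hL', hcount⟩ := ih (by omega) hout
    have hcount' : e + 2 ≤ #{p ∈ S | p ∈ L'} :=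
      hcount.trans (Finset.card_le_card (Finset.filter_subset_filter _ (Finset.filter_subset _ _)))
    have hcardL' := hcard L'
    obtain hmany | hout' := hcut L' hL'
    · exact ⟨L', hL', hmany⟩
    · exact absurd (isIndependent_of_card_le (by omega)) hout'

end Independence

section HilbertFunction

variable {K : Type} [Field K] {m e : ℕ} {L : Set (Pm K m)} {B T : Finset (Pm K m)}

/-- The Hilbert function in degree `e` of a set of points: the number of conditions that the
points impose on forms of degree `e`. -/
def hilbertFun (e : ℕ) (S : Set (Pm K m)) : ℕ := Module.finrank K (dualSpan e S)

lemma card_le_hilbertFun_of_isIndependent {S : Set (Pm K m)} (hTS : (T : Set (Pm K m)) ⊆ S)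
    (hT : IsIndependent e (T : Set (Pm K m))) : #T ≤ hilbertFun e S := by
  have hspan : Submodule.span K (Set.range fun a : T => nu e (a : Pm K m).rep) ≤ dualSpan e S :=
    Submodule.span_mono (Set.range_subset_iff.mpr fun a => ⟨a, hTS a.2, rfl⟩)
  simpa [hilbertFun, finrank_span_eq_card (show LinearIndependent K
    fun a : T => nu e (a : Pm K m).rep from hT)] using Submodule.finrank_mono hspan

open scoped Classical in
lemma min_add_min_le_hilbertFun (hL : IsLinearSub L) (B : Finset (Pm K m)) :
    min #{p ∈ B | p ∈ L} (e + 2) + min #{p ∈ B | p ∉ L} (e + 1) ≤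
      hilbertFun (e + 1) (B : Set (Pm K m)) := by
  obtain ⟨S, hSL, hS⟩ := Finset.exists_subset_card_eq (min_le_left #{p ∈ B | p ∈ L} (e + 2))
  obtain ⟨T, hTL, hT⟩ := Finset.exists_subset_card_eq (min_le_left #{p ∈ B | p ∉ L} (e + 1))
  have hSmem : ∀ p ∈ S, p ∈ B ∧ p ∈ L := fun p hp => Finset.mem_filter.mp (hSL hp)
  have hTmem : ∀ p ∈ T, p ∈ B ∧ p ∉ L := fun p hp => Finset.mem_filter.mp (hTL hp)
  have hdisj : Disjoint S T :=
    Finset.disjoint_left.mpr fun p hpS hpT => (hTmem p hpT).2 (hSmem p hpS).2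
  have hind : IsIndependent (e + 1) ((S ∪ T : Finset (Pm K m)) : Set (Pm K m)) := by
    refine isIndependent_of_inter_of_diff hL ?_ ?_
    · refine (isIndependent_of_card_le (S := S) (by omega)).mono ?_
      rintro p ⟨hp, hpL⟩
      exact (Finset.mem_union.mp hp).resolve_right fun hpT => (hTmem p hpT).2 hpL
    · refine (isIndependent_of_card_le (S := T) (by omega)).mono ?_
      rintro p ⟨hp, hpL⟩
      exact (Finset.mem_union.mp hp).resolve_left fun hpS => hpL (hSmem p hpS).2
  rw [← hS, ← hT, ← Finset.card_union_of_disjoint hdisj]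
  refine card_le_hilbertFun_of_isIndependent (fun p hp => ?_) hind
  exact (Finset.mem_union.mp hp).elim (fun h => (hSmem p h).1) fun h => (hTmem p h).1

open scoped Classical in
lemma le_hilbertFun_or_exists_isLine (hB : 2 * e + 3 ≤ #B) :
    2 * e + 3 ≤ hilbertFun (e + 1) (B : Set (Pm K m)) ∨
      ∃ L, IsLine L ∧ #{p ∈ B | p ∉ L} ≤ e := by
  obtain ⟨T, hTB, hT⟩ := Finset.exists_subset_card_eq hB
  by_cases hind : IsIndependent (e + 1) (T : Set (Pm K m))
  · exact .inl (hT ▸ card_le_hilbertFun_of_isIndependent (Finset.coe_subset.mpr hTB) hind)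
  obtain ⟨L, hL, hcount⟩ := exists_isLine_of_not_isIndependent (by omega) hind
  have hcount' : e + 3 ≤ #{p ∈ B | p ∈ L} :=
    hcount.trans (Finset.card_le_card (Finset.filter_subset_filter _ hTB))
  have hbound := min_add_min_le_hilbertFun (e := e) (isLinearSub_of_isLine hL) B
  by_cases hfew : #{p ∈ B | p ∉ L} ≤ e
  · exact .inr ⟨L, hL, hfew⟩
  · exact .inl (by omega)

/-- The inequality that the Hilbert function of `B` satisfies as soon as some combination of the
`ν_d(b)`, `b ∈ B`, with nonzero coefficients has all its catalecticants of rank at most `s`. -/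
def HasCatalecticantBound (d s : ℕ) (B : Finset (Pm K m)) : Prop :=
  ∀ u e, u + e = d →
    hilbertFun u (B : Set (Pm K m)) + hilbertFun e (B : Set (Pm K m)) ≤ #B + s

open scoped Classical in
lemma exists_isLine_of_hasCatalecticantBound {d s t : ℕ} (hB : HasCatalecticantBound d s B)
    (hs : 2 ≤ s) (hst : s ≤ 2 * t + 2) (hts : 2 * t + 2 ≤ s + 1) (hlow : d + s ≤ #B + 1)
    (hhigh : #B + s ≤ 2 * d + 1) :
    ∃ L, IsLine L ∧ d + 1 ≤ #{p ∈ B | p ∈ L} + t := by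
  have hcard (L : Set (Pm K m)) : #{p ∈ B | p ∈ L} + #{p ∈ B | p ∉ L} = #B :=
    Finset.card_filter_add_card_filter_not _
  obtain hbig | ⟨L, hL, hfew⟩ := le_hilbertFun_or_exists_isLine (e := t) (B := B) (by omega)
  · have hbound := hB (t + 1) (d - (t + 1)) (by omega)
    obtain ⟨T, hTB, hT⟩ := Finset.exists_subset_card_eq
      (show #B - (2 * t + 2 - s) ≤ #B by omega)
    have hdep : ¬IsIndependent (d - (t + 1)) (T : Set (Pm K m)) := fun hind => by
      have := card_le_hilbertFun_of_isIndependent (Finset.coe_subset.mpr hTB) hind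
      omega
    obtain ⟨L, hL, hcount⟩ := exists_isLine_of_not_isIndependent (by omega) hdep
    have hsub := Finset.card_le_card (Finset.filter_subset_filter (· ∈ L) hTB)
    exact ⟨L, hL, by omega⟩
  · have := hcard L
    exact ⟨L, hL, by omega⟩

open scoped Classical in
lemma lt_card_line_of_hasCatalecticantBound {d s t : ℕ} (hB : HasCatalecticantBound d s B)
    (hts : 2 * t + 2 ≤ s + 1) (hlow : d + s ≤ #B + 1) (hhigh : #B + s ≤ 2 * d + 1)
    (hL : IsLine L) (hcount : d + 1 ≤ #{p ∈ B | p ∈ L} + t) : d + 1 ≤ #{p ∈ B | p ∈ L} := by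
  have hcard : #{p ∈ B | p ∈ L} + #{p ∈ B | p ∉ L} = #B :=
    Finset.card_filter_add_card_filter_not _
  by_contra! hlt
  obtain ⟨j, hj⟩ := Nat.exists_eq_add_of_le (Nat.lt_succ_iff.mp hlt)
  obtain ⟨u, hu⟩ := Nat.exists_eq_add_of_le (show j + 2 ≤ s by omega)
  obtain ⟨e, he⟩ := Nat.exists_eq_add_of_le (show u + 2 ≤ d by omega)
  have hbound := hB (u + 1) (e + 1) (by omega)
  have hLu := min_add_min_le_hilbertFun (e := u) (isLinearSub_of_isLine hL) B
  have hLe := min_add_min_le_hilbertFun (e := e) (isLinearSub_of_isLine hL) B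
  omega

open scoped Classical in
lemma exists_isLine_lt_card_of_hasCatalecticantBound {d s : ℕ} (hB : HasCatalecticantBound d s B)
    (hs : 2 ≤ s) (hlow : d + s ≤ #B + 1) (hhigh : #B + s ≤ 2 * d + 1) :
    ∃ L, IsLine L ∧ d + 1 ≤ #{p ∈ B | p ∈ L} := by
  obtain ⟨L, hL, hcount⟩ := exists_isLine_of_hasCatalecticantBound (t := (s - 1) / 2) hB hs
    (by omega) (by omega) hlow hhigh
  exact ⟨L, hL, lt_card_line_of_hasCatalecticantBound hB (by omega) hlow hhigh hL hcount⟩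

lemma hasCatalecticantBound_of_rank_le {d s : ℕ} {c : Pm K m → K} (hc : ∀ b ∈ B, c b ≠ 0)
    (hrank : ∀ u e, (h : u + e = d) →
      (catalecticant h (∑ b ∈ B, c b • nu d b.rep)).rank ≤ s) :
    HasCatalecticantBound d s B := by
  intro u e h
  let f : Hd K m u →ₗ[K] (B → K) := LinearMap.pi fun b => nu u (b : Pm K m).rep
  let g : (B → K) →ₗ[K] Module.Dual K (Hd K m e) :=
    Fintype.linearCombination K fun b : B => c b • nu e (b : Pm K m).rep
  have hf : Module.finrank K f.range = hilbertFun u (B : Set (Pm K m)) := by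
    rw [finrank_range_pi, hilbertFun, dualSpan, Set.image_eq_range]
    rfl
  have hg : g.range = dualSpan e (B : Set (Pm K m)) := by
    rw [Fintype.range_linearCombination]
    refine le_antisymm (Submodule.span_le.mpr ?_) (Submodule.span_le.mpr ?_)
    · rintro _ ⟨b, rfl⟩
      exact Submodule.smul_mem _ _ (Submodule.subset_span ⟨b, b.2, rfl⟩)
    · rintro _ ⟨b, hb, rfl⟩
      exact (Submodule.smul_mem_iff _ (hc b hb)).mp (Submodule.subset_span ⟨⟨b, hb⟩, rfl⟩)
  have hgf : g ∘ₗ f = catalecticant h (∑ b ∈ B, c b • nu d b.rep) := by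
    refine LinearMap.ext fun x => ?_
    simp only [f, g, LinearMap.comp_apply, Fintype.linearCombination_apply, LinearMap.pi_apply,
      map_sum, map_smul, LinearMap.sum_apply, LinearMap.smul_apply, catalecticant_nu]
    rw [← Finset.sum_coe_sort B]
    exact Finset.sum_congr rfl fun b _ => smul_comm _ _ _
  have hsylvester := finrank_range_add_finrank_range_le f g
  rw [hf, hg, hgf, Module.finrank_fintype_fun_eq_card, Fintype.card_coe] at hsylvester
  exact hsylvester.trans (Nat.add_le_add_left (Module.finrank_le_of_rank_le (hrank u e h)) _)

end HilbertFunction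

section Rank

variable {K : Type} [Field K] {m d s : ℕ} {P : PN K m d}

lemma exists_span_rep_le_dualSpan {S : Finset (PN K m d)}
    (hS : (S : Set (PN K m d)) ⊆ XSet K m d) :
    ∃ B : Finset (Pm K m), #B ≤ #S ∧
      Submodule.span K (Projectivization.rep '' (S : Set (PN K m d))) ≤
        dualSpan d (B : Set (Pm K m)) := by
  classical
  choose! a ha using fun Q (hQ : Q ∈ S) => hS hQ
  refine ⟨S.image a, Finset.card_image_le, Submodule.span_le.mpr ?_⟩
  rintro _ ⟨Q, hQ, rfl⟩
  have hQa : Q.rep ∈ Submodule.span K {nu d (a Q).rep} := by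
    rw [← ha Q hQ, Q.submodule_eq]
    exact Submodule.mem_span_singleton_self _
  refine (Submodule.span_singleton_le_iff_mem _ _).mpr (Submodule.subset_span ?_) hQa
  exact ⟨a Q, Finset.mem_coe.mpr (Finset.mem_image_of_mem a hQ), rfl⟩

lemma rank_catalecticant_le_of_mem_secantWrt (hP : P ∈ secantWrt (XSet K m d) s) {u e : ℕ}
    (h : u + e = d) : (catalecticant h P.rep).rank ≤ s := by
  refine rank_le_of_mem_zClosure _ ?_ hP
  rintro Q ⟨S, hSX, hS, hQ⟩
  obtain ⟨B, hB, hspan⟩ := exists_span_rep_le_dualSpan hSX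
  exact (rank_catalecticant_le h (hspan hQ)).trans (mod_cast hB.trans hS)

lemma mem_secantWrt_of_brank_eq (hs : s ≠ 0) (hP : brank d P = s) :
    P ∈ secantWrt (XSet K m d) s := by
  have hpos : 0 < sInf {k | 0 < k ∧ P ∈ secantWrt (XSet K m d) k} :=
    Nat.pos_of_ne_zero (hP.trans_ne hs)
  exact hP ▸ (Nat.sInf_mem (Nat.nonempty_of_pos_sInf hpos)).2

lemma srank_le_card {B : Finset (Pm K m)} (hP : P.rep ∈ dualSpan d (B : Set (Pm K m))) :
    srank d P ≤ #B := by
  classical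
  let F : Pm K m → PN K m d := fun b => .mk K (nu d b.rep) (nu_ne_zero d b.rep_nonzero)
  suffices srank d P ≤ #(B.image F) from this.trans Finset.card_image_le
  refine Nat.sInf_le ⟨B.image F, ?_, rfl, ?_⟩
  · intro Q hQ
    obtain ⟨b, -, rfl⟩ := Finset.mem_image.mp (Finset.mem_coe.mp hQ)
    exact ⟨b, Projectivization.submodule_mk _ _⟩
  · refine (Submodule.span_le.mpr ?_ : dualSpan d (B : Set (Pm K m)) ≤ _) hP
    rintro _ ⟨b, hb, rfl⟩
    obtain ⟨a, ha⟩ := Projectivization.exists_smul_eq_mk_rep K _ (nu_ne_zero d b.rep_nonzero)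
    refine (Submodule.smul_mem_iff _ a.ne_zero).mp (Submodule.subset_span ⟨F b, ?_, ha.symm⟩)
    exact Finset.mem_coe.mpr (Finset.mem_image_of_mem F hb)

lemma exists_sum_eq_rep_of_srank_ne_zero (hP : srank d P ≠ 0) :
    ∃ (B : Finset (Pm K m)) (c : Pm K m → K), #B = srank d P ∧ (∀ b ∈ B, c b ≠ 0) ∧
      ∑ b ∈ B, c b • nu d b.rep = P.rep := by
  obtain ⟨S, hSX, hS, hPS⟩ := Nat.sInf_mem (Nat.nonempty_of_pos_sInf (Nat.pos_of_ne_zero hP))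
  obtain ⟨B, hB, hspan⟩ := exists_span_rep_le_dualSpan hSX
  obtain ⟨c, hcB, hc⟩ := Finsupp.mem_span_image_iff_linearCombination K |>.mp (hspan hPS)
  have hsupp : c.support ⊆ B := Finset.coe_subset.mp hcB
  have hsum : ∑ b ∈ c.support, c b • nu d b.rep = P.rep := hc
  refine ⟨c.support, c, ?_, fun b hb => Finsupp.mem_support_iff.mp hb, hsum⟩
  refine ((Finset.card_le_card hsupp).trans (hB.trans hS.le)).antisymm (srank_le_card ?_)
  rw [← hsum]
  exact Submodule.sum_mem _ fun b hb => Submodule.smul_mem _ _ (Submodule.subset_span ⟨b, hb, rfl⟩)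

end Rank

section BinaryForms

lemma eval_eq_sum_range_of_isHomogeneous {R : Type*} [CommSemiring R]
    {p : MvPolynomial (Fin 2) R} {d : ℕ} (hp : p.IsHomogeneous d) (x y : R) :
    eval ![x, y] p = ∑ i ∈ Finset.range (d + 1),
      (x ^ i * y ^ (d - i)) * coeff (Finsupp.single 0 i + Finsupp.single 1 (d - i)) p := by
  let mon (i : ℕ) : Fin 2 →₀ ℕ := Finsupp.single 0 i + Finsupp.single 1 (d - i)
  have hmon : Function.Injective mon := fun i j hij => by
    simpa [mon] using DFunLike.congr_fun hij 0
  have hsupp : p.support ⊆ (Finset.range (d + 1)).image mon := by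
    intro k hk
    have hdeg : k 0 + k 1 = d := by
      rw [hp.degree_eq_sum_deg_support hk, ← Finsupp.degree_apply, Finsupp.degree_eq_sum,
        Fin.sum_univ_two]
    refine Finset.mem_image.mpr ⟨k 0, Finset.mem_range.mpr (by omega), ?_⟩
    ext i
    fin_cases i
    · simp [mon]
    · simp [mon, ← hdeg]
  rw [eval_eq', Finset.sum_subset hsupp fun k _ hk => by simp [notMem_support_iff.mp hk],
    Finset.sum_image hmon.injOn]
  refine Finset.sum_congr rfl fun i _ => ?_
  simp [mon, Fin.prod_univ_two, mul_comm]

lemma exists_injective_pow_eq {K : Type*} [Field K] [IsAlgClosed K] [CharZero K] {d : ℕ}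
    (hd : d ≠ 0) {a : K} (ha : a ≠ 0) :
    ∃ α : Fin d → K, Function.Injective α ∧ ∀ i, α i ^ d = a := by
  classical
  let p : Polynomial K := .X ^ d - .C a
  have hcard : #p.roots.toFinset = d := by
    rw [Multiset.toFinset_card_of_nodup (Polynomial.nodup_roots
      (Polynomial.separable_X_pow_sub_C a (Nat.cast_ne_zero.mpr hd) ha)),
      IsAlgClosed.card_roots_eq_natDegree, Polynomial.natDegree_X_pow_sub_C]
  let α := (p.roots.toFinset.equivFinOfCardEq hcard).symm
  refine ⟨fun i => α i, Subtype.val_injective.comp α.injective, fun i => ?_⟩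
  have hroot := Polynomial.isRoot_of_mem_roots (Multiset.mem_toFinset.mp (α i).2)
  simpa [p, sub_eq_zero] using hroot

lemma exists_sum_mul_pow_eq {K : Type*} [Field K] [IsAlgClosed K] [CharZero K] {d : ℕ}
    (hd : d ≠ 0) {M : ℕ → K} (hM₀ : M 0 ≠ 0) (hM : M d ≠ 0) :
    ∃ α c : Fin d → K, ∀ i ≤ d, ∑ k, c k * α k ^ i = M i := by
  -- With nodes the `d`-th roots of `M d / M 0`, the top moment follows from the lowest one.
  obtain ⟨α, hinj, hα⟩ := exists_injective_pow_eq hd (div_ne_zero hM hM₀)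
  have hunit : IsUnit (Matrix.vandermonde α) := by
    rw [Matrix.isUnit_iff_isUnit_det, isUnit_iff_ne_zero]
    exact Matrix.det_vandermonde_ne_zero_iff.mpr hinj
  obtain ⟨c, hc⟩ := Matrix.vecMul_surjective_iff_isUnit.mpr hunit fun i => M i
  have hlt : ∀ i < d, ∑ k, c k * α k ^ i = M i := fun i hi => by
    simpa [Matrix.vecMul, dotProduct, Matrix.vandermonde_apply] using congrFun hc ⟨i, hi⟩
  refine ⟨α, c, fun i hi => ?_⟩
  obtain hi | rfl := hi.lt_or_eq
  · exact hlt i hi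
  · have h0 : ∑ k, c k = M 0 := by simpa using hlt 0 (Nat.pos_of_ne_zero hd)
    simp only [hα, ← Finset.sum_mul, h0]
    field_simp

lemma finite_setOf_sum_mul_add_mul_pow_eq_zero {K ι : Type*} [Field K] [CharZero K] {d i : ℕ}
    (hi : i ≤ d) {B : Finset ι} {c β γ : ι → K}
    (hne : ∑ b ∈ B, c b * (β b ^ i * γ b ^ (d - i)) ≠ 0) :
    {τ : K | ∑ b ∈ B, c b * (β b + τ * γ b) ^ d = 0}.Finite := by
  let Q : Polynomial K := ∑ k ∈ Finset.range (d + 1),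
    .C ((∑ b ∈ B, c b * (β b ^ k * γ b ^ (d - k))) * (d.choose k : K)) * .X ^ (d - k)
  have heval : ∀ τ, Q.eval τ = ∑ b ∈ B, c b * (β b + τ * γ b) ^ d := by
    intro τ
    simp only [Q, Polynomial.eval_finsetSum, Polynomial.eval_mul, Polynomial.eval_C,
      Polynomial.eval_pow, Polynomial.eval_X, add_pow, Finset.mul_sum, Finset.sum_mul]
    rw [Finset.sum_comm]
    exact Finset.sum_congr rfl fun b _ => Finset.sum_congr rfl fun k _ => by ring
  have hcoeff : Q.coeff (d - i) =
      (∑ b ∈ B, c b * (β b ^ i * γ b ^ (d - i))) * (d.choose i : K) := by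
    simp only [Q, Polynomial.finsetSum_coeff, Polynomial.coeff_C_mul_X_pow]
    rw [Finset.sum_eq_single_of_mem i (Finset.mem_range.mpr (by omega)), if_pos rfl]
    intro k hk hki
    rw [Finset.mem_range] at hk
    exact if_neg (by omega)
  have hQ : Q ≠ 0 := by
    intro h0
    rw [h0, Polynomial.coeff_zero] at hcoeff
    exact mul_ne_zero hne (Nat.cast_ne_zero.mpr (Nat.choose_pos hi).ne') hcoeff.symm
  refine (Polynomial.finite_setOfPred_isRoot hQ).subset fun τ hτ => ?_
  exact (heval τ).trans hτ

variable {K : Type} [Field K] {m d : ℕ}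

lemma exists_nu_add_eq_sum (d : ℕ) (v w : Fin (m + 1) → K) :
    ∃ A : ℕ → Module.Dual K (Hd K m d), ∀ x y : K, nu d (x • v + y • w) =
      ∑ i ∈ Finset.range (d + 1), (x ^ i * y ^ (d - i)) • A i := by
  let φ : PR K m →ₐ[K] MvPolynomial (Fin 2) K := aeval fun i => C (v i) * X 0 + C (w i) * X 1
  refine ⟨fun i => lcoeff K (Finsupp.single 0 i + Finsupp.single 1 (d - i)) ∘ₗ
    φ.toLinearMap ∘ₗ (Hd K m d).subtype, fun x y => ?_⟩
  ext f
  have hφf : (φ f).IsHomogeneous d := by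
    have hf : (f : PR K m).IsHomogeneous d := f.2
    simpa [φ] using hf.aeval (fun i => C (v i) * X 0 + C (w i) * X 1 : Fin (m + 1) → _) (n := 1)
      fun i => (isHomogeneous_C_mul_X _ _).add (isHomogeneous_C_mul_X _ _)
  have heval : (aeval ![x, y]).comp φ = aeval (x • v + y • w) := by
    ext i
    simp [φ, mul_comm]
  rw [nu_apply, ← coe_aeval_eq_eval, ← heval]
  simpa [aeval_eq_eval] using eval_eq_sum_range_of_isHomogeneous hφf x y

lemma exists_nu_mem_span_nu_rep (hd : d ≠ 0) (x : Fin (m + 1) → K) :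
    ∃ a : Pm K m, nu d x ∈ Submodule.span K {nu d a.rep} := by
  obtain rfl | hx := eq_or_ne x 0
  · obtain ⟨a⟩ : Nonempty (Pm K m) := inferInstance
    refine ⟨a, ?_⟩
    rw [← zero_smul K a.rep, nu_smul, zero_pow hd, zero_smul]
    exact Submodule.zero_mem _
  · obtain ⟨a, ha⟩ := Projectivization.exists_smul_eq_mk_rep K x hx
    refine ⟨.mk K x hx, Submodule.mem_span_singleton.mpr ⟨((a⁻¹ : Kˣ) : K) ^ d, ?_⟩⟩
    rw [← nu_smul, ← ha]
    exact congrArg (nu d) (inv_smul_smul a x)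

variable [IsAlgClosed K] [CharZero K] {ι : Type*} {B : Finset ι}

lemma exists_sum_nu_mem_dualSpan_of_ne_zero (hd : d ≠ 0) {c x y : ι → K}
    (hx : ∑ b ∈ B, c b * x b ^ d ≠ 0) (hy : ∑ b ∈ B, c b * y b ^ d ≠ 0)
    (v w : Fin (m + 1) → K) :
    ∃ D : Finset (Pm K m), #D ≤ d ∧
      ∑ b ∈ B, c b • nu d (x b • v + y b • w) ∈ dualSpan d (D : Set (Pm K m)) := by
  classical
  obtain ⟨A, hA⟩ := exists_nu_add_eq_sum d v w
  obtain ⟨α, a, hα⟩ := exists_sum_mul_pow_eq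
    (M := fun i => ∑ b ∈ B, c b * (x b ^ i * y b ^ (d - i))) hd (by simpa using hy)
    (by simpa using hx)
  have hsum : ∑ b ∈ B, c b • nu d (x b • v + y b • w) =
      ∑ k, a k • nu d (α k • v + (1 : K) • w) := by
    simp only [hA, one_pow, mul_one, Finset.smul_sum, smul_smul]
    rw [Finset.sum_comm, Finset.sum_comm (s := Finset.univ)]
    refine Finset.sum_congr rfl fun i hi => ?_
    rw [← Finset.sum_smul, ← Finset.sum_smul, hα i (Finset.mem_range_succ_iff.mp hi)]
  choose p hp using fun k => exists_nu_mem_span_nu_rep hd (α k • v + (1 : K) • w)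
  refine ⟨Finset.univ.image p, Finset.card_image_le.trans_eq (Finset.card_fin d), ?_⟩
  rw [hsum]
  refine Submodule.sum_mem _ fun k _ => Submodule.smul_mem _ _ ?_
  refine (Submodule.span_singleton_le_iff_mem _ _).mpr (Submodule.subset_span ?_) (hp k)
  exact ⟨p k, Finset.mem_coe.mpr (Finset.mem_image_of_mem p (Finset.mem_univ k)), rfl⟩

lemma exists_sum_nu_add_mem_dualSpan (hd : d ≠ 0) (c β γ : ι → K) (v w : Fin (m + 1) → K) :
    ∃ D : Finset (Pm K m), #D ≤ d ∧
      ∑ b ∈ B, c b • nu d (β b • v + γ b • w) ∈ dualSpan d (D : Set (Pm K m)) := by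
  by_cases hzero : ∀ i ≤ d, ∑ b ∈ B, c b * (β b ^ i * γ b ^ (d - i)) = 0
  · obtain ⟨A, hA⟩ := exists_nu_add_eq_sum d v w
    have hsum : ∑ b ∈ B, c b • nu d (β b • v + γ b • w) = 0 := by
      simp only [hA, Finset.smul_sum, smul_smul]
      rw [Finset.sum_comm]
      refine Finset.sum_eq_zero fun i hi => ?_
      rw [← Finset.sum_smul, hzero i (Finset.mem_range_succ_iff.mp hi), zero_smul]
    exact ⟨∅, Nat.zero_le d, hsum ▸ Submodule.zero_mem _⟩
  · push Not at hzero
    obtain ⟨i, hi, hne⟩ := hzero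
    -- In generic coordinates on the line neither extreme moment vanishes.
    obtain ⟨τ, hτ, τ', hτ', hττ'⟩ :=
      (finite_setOf_sum_mul_add_mul_pow_eq_zero hi hne).infinite_compl.nontrivial
    have hsub : τ' - τ ≠ 0 := sub_ne_zero.mpr hττ'.symm
    obtain ⟨D, hD, hmem⟩ := exists_sum_nu_mem_dualSpan_of_ne_zero hd hτ hτ'
      ((τ' - τ)⁻¹ • (τ' • v - w)) ((τ' - τ)⁻¹ • (w - τ • v))
    refine ⟨D, hD, ?_⟩
    convert hmem using 4 with b
    match_scalars <;> field_simp <;> ring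

lemma exists_sum_nu_mem_dualSpan_of_isLine (hd : d ≠ 0) {L : Set (Pm K m)} (hL : IsLine L)
    {B : Finset (Pm K m)} (hB : ∀ b ∈ B, b ∈ L) (c : Pm K m → K) :
    ∃ D : Finset (Pm K m), #D ≤ d ∧
      ∑ b ∈ B, c b • nu d b.rep ∈ dualSpan d (D : Set (Pm K m)) := by
  obtain ⟨W, hW, rfl⟩ := hL
  let e := Module.finBasisOfFinrankEq K W hW
  have hcoord : ∀ b ∈ B, ∃ β γ : K, b.rep = β • (e 0 : Fin (m + 1) → K) + γ • (e 1 : _) := by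
    intro b hb
    let x : W := ⟨b.rep, rep_mem_iff_submodule_le.mpr (hB b hb)⟩
    refine ⟨e.repr x 0, e.repr x 1, ?_⟩
    have hx := congrArg W.subtype (e.sum_repr x)
    rw [Fin.sum_univ_two, map_add, map_smul, map_smul] at hx
    exact hx.symm
  choose! β γ hβγ using hcoord
  rw [Finset.sum_congr rfl fun b hb => by rw [hβγ b hb]]
  exact exists_sum_nu_add_mem_dualSpan hd c β γ _ _

end BinaryForms

section RankGap

variable {K : Type} [Field K] [IsAlgClosed K] [CharZero K] {m d : ℕ}

open scoped Classical in
lemma card_filter_le_of_sum_eq_rep (hd : d ≠ 0) {P : PN K m d} {B : Finset (Pm K m)}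
    {c : Pm K m → K} (hB : #B = srank d P) (hc : ∑ b ∈ B, c b • nu d b.rep = P.rep)
    {L : Set (Pm K m)} (hL : IsLine L) : #{p ∈ B | p ∈ L} ≤ d := by
  obtain ⟨D, hD, hmem⟩ := exists_sum_nu_mem_dualSpan_of_isLine hd hL
    (B := {p ∈ B | p ∈ L}) (fun b hb => (Finset.mem_filter.mp hb).2) c
  have hP : P.rep ∈ dualSpan d ((D ∪ {p ∈ B | p ∉ L} : Finset (Pm K m)) : Set (Pm K m)) := by
    rw [← hc, ← Finset.sum_filter_add_sum_filter_not B (· ∈ L)]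
    refine Submodule.add_mem _ ?_ (Submodule.sum_mem _ fun b hb => Submodule.smul_mem _ _ ?_)
    · refine Submodule.span_mono (Set.image_mono ?_) hmem
      exact Finset.coe_subset.mpr Finset.subset_union_left
    · exact Submodule.subset_span ⟨b, Finset.mem_coe.mpr (Finset.mem_union_right _ hb), rfl⟩
  have hunion := (srank_le_card hP).trans (Finset.card_union_le _ _)
  have hcard : #{p ∈ B | p ∈ L} + #{p ∈ B | p ∉ L} = #B :=
    Finset.card_filter_add_card_filter_not _
  omega

lemma srank_gap_of_mem_secantWrt {s : ℕ} {P : PN K m d} (hs : 2 ≤ s)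
    (hP : P ∈ secantWrt (XSet K m d) s) :
    srank d P + 1 < d + s ∨ 2 * d + 1 < srank d P + s := by
  by_contra! ⟨hlow, hhigh⟩
  obtain ⟨B, c, hcard, hc, hsum⟩ := exists_sum_eq_rep_of_srank_ne_zero (P := P) (by omega)
  have hbound : HasCatalecticantBound d s B := hasCatalecticantBound_of_rank_le hc fun u e h =>
    hsum ▸ rank_catalecticant_le_of_mem_secantWrt hP h
  obtain ⟨L, hL, hcount⟩ := exists_isLine_lt_card_of_hasCatalecticantBound hbound hs
    (by omega) (by omega)
  have := card_filter_le_of_sum_eq_rep (by omega) hcard hsum hL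
  omega

end RankGap

end

end Veronese

theorem stmt16_general (K : Type) [Field K] [IsAlgClosed K] [CharZero K]
    (m s d : ℕ) (hs : 2 ≤ s) :
    ∀ r : ℕ, d + s ≤ r + 1 → r + s ≤ 2 * d + 1 → sigmaSet K m d s r = ∅ := by
  rintro r hlow hhigh
  refine Set.eq_empty_of_forall_notMem ?_
  rintro P ⟨hbrank, rfl⟩
  have hgap := Veronese.srank_gap_of_mem_secantWrt hs
    (Veronese.mem_secantWrt_of_brank_eq (by omega) hbrank)
  omega

/-- Step (c) of the proof of the main theorem: emptiness of `σ_{s,r}(X_{m,d})` for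
`d+s-1 ≤ r ≤ 2d+1-s`. -/
theorem stmt16 (K : Type) [Field K] [IsAlgClosed K] [CharZero K]
    (m s d : ℕ) (hm : 2 ≤ m) (hs : 4 ≤ s) (hd : 2 * s + 2 ≤ d) :
    ∀ r : ℕ, d + s ≤ r + 1 → r + s ≤ 2 * d + 1 → sigmaSet K m d s r = ∅ :=
  stmt16_general K m s d (by omega)
end
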